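/- arXiv:2206.14224 — 6 statements merged into one kernel-verified Lean document; each statement's English description precedes it below -/
import Mathlib

section
/- There exists a Borel equivalence relation F on 𝓔_∞ such that for every m ∈ ℕ and every B ∈ 𝓔_∞, the restriction of F to the set [m,B]_∞ = {A ∈ 𝓔_∞ : A ≤ B and A, B agree on {0,…,m−1}} is Borel bireducible with the equivalence relation E_1 on 2^{ℕ×ℕ}. -/
open Classical

/-- The space `𝓔_∞` of equivalence relations on `ℕ` with infinitely many classes
(infinite partitions of `ℕ`). -/
def Einf : Type := {A : Setoid ℕ // Infinite (Quotient A)}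

namespace Einf

/-- `Coarsen A B` (written `A ≤ B` in the paper): `A` is a coarsening of `B`,
i.e. every `A`-class is a union of `B`-classes. -/
def Coarsen (A B : Einf) : Prop := ∀ i j : ℕ, B.1 i j → A.1 i j

/-- `μ_n(A)`: the `(n+1)`-st smallest minimal representative of an `A`-class. -/
noncomputable def mu (A : Einf) (n : ℕ) : ℕ :=
  Nat.nth (fun k => ∀ m, A.1 m k → k ≤ m) n

/-- `𝓔_∞^fin`: equivalence relations on initial segments `{0,…,k−1}` of `ℕ`. -/
def FinApprox : Type := Σ k : ℕ, Setoid (Fin k)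

/-- `r_n(A)`: the restriction of `A` to `{0,…,μ_n(A)−1}`. -/
noncomputable def rn (A : Einf) (n : ℕ) : FinApprox :=
  ⟨A.mu n, Setoid.comap (fun i => (i : ℕ)) A.1⟩

/-- `s ⊑ A`: `s` is an initial approximation of `A`, i.e. `s = r_n(A)` for some `n`. -/
def InitSeg (s : FinApprox) (A : Einf) : Prop := ∃ n, rn A n = s

/-- The Ellentuck cube `[s, A] = {B ∈ 𝓔_∞ : s ⊑ B and B ≤ A}`. -/
def cube (s : FinApprox) (A : Einf) : Set Einf := {B | InitSeg s B ∧ Coarsen B A}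

/-- The identification of `𝓔_∞` with `𝓒𝓢 ⊆ 2^{ℕ×ℕ}`: `toCS A n m = 1` iff
`m` is `A`-equivalent to `μ_n(A)` (so the `n`-th row is the `A`-class of `μ_n(A)`). -/
noncomputable def toCS (A : Einf) : ℕ → ℕ → Bool :=
  fun n m => decide (A.1 m (A.mu n))

/-- The Borel structure of the Polish topology on `𝓔_∞`, pulled back from `2^{ℕ×ℕ}`. -/
noncomputable instance : MeasurableSpace Einf :=
  MeasurableSpace.comap toCS inferInstance

/-- `𝓧 ⊆ 𝓔_∞` is Ramsey null. -/
def RamseyNull (X : Set Einf) : Prop :=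
  ∀ s A, (cube s A).Nonempty → ∃ B ∈ cube s A, cube s B ∩ X = ∅

/-- `𝓧 ⊆ 𝓔_∞` is Ramsey conull: its complement is Ramsey null. -/
def RamseyConull (X : Set Einf) : Prop := RamseyNull Xᶜ

end Einf

open Einf

/-- The equivalence relation `E₁` on `2^{ℕ×ℕ}`: eventual (row-wise) equality. -/
def E1 (x y : ℕ → ℕ → Bool) : Prop := ∃ n₀ : ℕ, ∀ n m : ℕ, x (n₀ + n) m = y (n₀ + n) m

/-- The Carlson-Simpson cube `[m,B]_∞ = {A ∈ 𝓔_∞ : A ≤ B and A, B agree on {0,…,m−1}}`. -/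
def cubeM (m : ℕ) (B : Einf) : Set Einf :=
  {A | Coarsen A B ∧ ∀ i j : ℕ, i < m → j < m → (A.1 i j ↔ B.1 i j)}

/-- `k` is the least element of its `A`-class. -/
def IsMinE (A : Einf) (k : ℕ) : Prop := ∀ m, A.1 m k → k ≤ m

lemma exists_minE (A : Einf) (i : ℕ) : ∃ k, IsMinE A k ∧ A.1 k i ∧ k ≤ i := by
  have hex : ∃ k, A.1 k i := ⟨i, A.1.refl i⟩
  refine ⟨Nat.find hex, ?_, Nat.find_spec hex, Nat.find_min' hex (A.1.refl i)⟩
  intro m hm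
  exact Nat.find_min' hex (A.1.trans hm (Nat.find_spec hex))

lemma minE_unique (A : Einf) {k l : ℕ} (hk : IsMinE A k) (hl : IsMinE A l) (h : A.1 k l) :
    k = l := le_antisymm (hk l (A.1.symm h)) (hl k h)

lemma infinite_minE (A : Einf) : (setOf (IsMinE A)).Infinite := by
  intro hfin
  have hA := A.2
  have : Finite (setOf (IsMinE A)) := hfin
  have hs : Function.Surjective (fun k : setOf (IsMinE A) => (Quotient.mk A.1 k.1)) := by
    intro q
    induction q using Quotient.inductionOn with
    | h i =>
      obtain ⟨k, hk, hki, _⟩ := exists_minE A i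
      exact ⟨⟨k, hk⟩, Quotient.sound hki⟩
  have := Finite.of_surjective _ hs
  exact not_finite (Quotient A.1)

lemma mu_eq (A : Einf) (n : ℕ) : A.mu n = Nat.nth (IsMinE A) n := rfl

lemma mu_strictMono (A : Einf) : StrictMono A.mu := Nat.nth_strictMono (infinite_minE A)

lemma mu_isMin (A : Einf) (n : ℕ) : IsMinE A (A.mu n) := Nat.nth_mem_of_infinite (infinite_minE A) n

lemma exists_mu (A : Einf) (i : ℕ) : ∃ n, A.1 (A.mu n) i ∧ A.mu n ≤ i := by
  obtain ⟨k, hk, hki, hle⟩ := exists_minE A i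
  refine ⟨Nat.count (IsMinE A) k, ?_⟩
  rw [mu_eq, Nat.nth_count hk]
  exact ⟨hki, hle⟩

/-- The index of the `B`-class of `i`. -/
noncomputable def cidx (B : Einf) (i : ℕ) : ℕ := (exists_mu B i).choose

lemma cidx_rel (B : Einf) (i : ℕ) : B.1 (B.mu (cidx B i)) i := (exists_mu B i).choose_spec.1
lemma cidx_le (B : Einf) (i : ℕ) : B.mu (cidx B i) ≤ i := (exists_mu B i).choose_spec.2

lemma cidx_eq (B : Einf) {i j : ℕ} (h : B.1 i j) : cidx B i = cidx B j := by
  apply (mu_strictMono B).injective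
  apply minE_unique B (mu_isMin B _) (mu_isMin B _)
  exact B.1.trans (cidx_rel B i) (B.1.trans h (B.1.symm (cidx_rel B j)))

lemma rel_of_cidx (B : Einf) {i j : ℕ} (h : cidx B i = cidx B j) : B.1 i j := by
  have h1 := cidx_rel B i
  rw [h] at h1
  exact B.1.trans (B.1.symm h1) (cidx_rel B j)

lemma cidx_mu (B : Einf) (k : ℕ) : cidx B (B.mu k) = k := by
  apply (mu_strictMono B).injective
  exact minE_unique B (mu_isMin B _) (mu_isMin B _) (cidx_rel B _)

lemma measurable_toCS : Measurable toCS := comap_measurable toCS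

lemma measurableSet_rel (i j : ℕ) : MeasurableSet {A : Einf | A.1 i j} := by
  have : {A : Einf | A.1 i j} = ⋃ n, {A : Einf | toCS A n i = true} ∩ {A | toCS A n j = true} := by
    ext A
    simp only [Set.mem_setOf_eq, Set.mem_iUnion, Set.mem_inter_iff, toCS, decide_eq_true_eq]
    constructor
    · intro h
      obtain ⟨n, hn, _⟩ := exists_mu A i
      exact ⟨n, A.1.symm hn, A.1.symm (A.1.trans hn h)⟩
    · rintro ⟨n, h1, h2⟩
      exact A.1.trans h1 (A.1.symm h2)
  rw [this]
  have hm : ∀ n k, MeasurableSet {A : Einf | toCS A n k = true} := fun n k =>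
    ((measurable_pi_apply k).comp ((measurable_pi_apply n).comp measurable_toCS))
      (measurableSet_singleton true)
  exact MeasurableSet.iUnion fun n => (hm n i).inter (hm n j)

/-- Row `n` is the `A`-class of `n` when `n` is least in its class, and empty otherwise. -/
noncomputable def rows (A : Einf) : ℕ → ℕ → Bool := fun n m => decide (IsMinE A n ∧ A.1 n m)

lemma measurable_rows : Measurable rows := by
  refine measurable_pi_lambda _ fun n => measurable_pi_lambda _ fun m => ?_
  refine measurable_to_bool ?_
  have : (fun A => rows A n m) ⁻¹' {true} =
      (⋂ k, {A : Einf | A.1 k n → n ≤ k}) ∩ {A : Einf | A.1 n m} := by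
    ext A
    simp only [Set.mem_preimage, Set.mem_singleton_iff, Set.mem_inter_iff, Set.mem_iInter]
    exact decide_eq_true_iff
  rw [this]
  refine (MeasurableSet.iInter fun k => ?_).inter (measurableSet_rel n m)
  exact (measurableSet_rel k n).imp (MeasurableSet.const _)

lemma E1_equiv : Equivalence E1 := by
  refine ⟨fun x => ⟨0, fun _ _ => rfl⟩, ?_, ?_⟩
  · rintro x y ⟨n, h⟩
    exact ⟨n, fun a b => (h a b).symm⟩
  · rintro x y z ⟨n, h⟩ ⟨n', h'⟩
    refine ⟨n + n', fun a b => ?_⟩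
    have h1 := h (n' + a) b
    have h2 := h' (n + a) b
    rw [show n + (n' + a) = n + n' + a by ring] at h1
    rw [show n' + (n + a) = n + n' + a by ring] at h2
    exact h1.trans h2

lemma measurableSet_E1 :
    MeasurableSet {p : (ℕ → ℕ → Bool) × (ℕ → ℕ → Bool) | E1 p.1 p.2} := by
  have : {p : (ℕ → ℕ → Bool) × (ℕ → ℕ → Bool) | E1 p.1 p.2} =
      ⋃ n₀ : ℕ, ⋂ n : ℕ, ⋂ m : ℕ, {p | p.1 (n₀ + n) m = p.2 (n₀ + n) m} := by
    ext p
    simp [E1]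
  rw [this]
  refine MeasurableSet.iUnion fun n₀ => MeasurableSet.iInter fun n => MeasurableSet.iInter fun m =>
    measurableSet_eq_fun ?_ ?_
  · exact (measurable_pi_apply m).comp ((measurable_pi_apply (n₀ + n)).comp measurable_fst)
  · exact (measurable_pi_apply m).comp ((measurable_pi_apply (n₀ + n)).comp measurable_snd)

/-- The label given to the `j`-th class of `B` in the coarsening coded by `x`. -/
def lab (M : ℕ) (x : ℕ → ℕ → Bool) (j : ℕ) : ℕ :=
  if j < M then j
  else if (j - M) % 2 = 0 then M + (j - M) / 2
  else if x (Nat.unpair ((j - M) / 2)).1 (Nat.unpair ((j - M) / 2)).2 = true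
    then M + (Nat.unpair ((j - M) / 2)).1 else 0

/-- The least index with label `l`. -/
def sec (M l : ℕ) : ℕ := if l < M then l else M + 2 * (l - M)

lemma lab_sec (M : ℕ) (x : ℕ → ℕ → Bool) (l : ℕ) : lab M x (sec M l) = l := by
  unfold lab sec
  split_ifs <;> omega

lemma sec_lab_le (M : ℕ) (hM : 0 < M) (x : ℕ → ℕ → Bool) (j : ℕ) : sec M (lab M x j) ≤ j := by
  have := Nat.unpair_left_le ((j - M) / 2)
  unfold lab sec
  split_ifs <;> omega

lemma lab_odd (M : ℕ) (x : ℕ → ℕ → Bool) (n i : ℕ) :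
    lab M x (M + (2 * Nat.pair n i + 1)) = if x n i = true then M + n else 0 := by
  unfold lab
  have h1 : M + (2 * Nat.pair n i + 1) - M = 2 * Nat.pair n i + 1 := by omega
  have h2 : (2 * Nat.pair n i + 1) / 2 = Nat.pair n i := by omega
  rw [h1, h2, if_neg (by omega), if_neg (by omega)]
  simp

lemma lab_congr (M : ℕ) (hM : 0 < M) (x y : ℕ → ℕ → Bool) (n : ℕ) (h : ∀ i, x n i = y n i) (j : ℕ)
    (hj : lab M x j = M + n) : lab M y j = M + n := by
  unfold lab at hj ⊢
  by_cases h1 : j < M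
  · simpa [h1] using hj
  by_cases h2 : (j - M) % 2 = 0
  · simpa [h1, h2] using hj
  simp only [h1, h2, if_false] at hj ⊢
  split_ifs at hj with h3
  · have : (Nat.unpair ((j - M) / 2)).1 = n := by omega
    rw [this] at h3 ⊢
    rw [← h, if_pos h3]
  · omega

lemma measurable_lab (M j : ℕ) : Measurable fun x => lab M x j := by
  unfold lab
  split_ifs
  · exact measurable_const
  · exact measurable_const
  · refine Measurable.ite ?_ measurable_const measurable_const
    have hm : ∀ a b : ℕ, Measurable (fun x : ℕ → ℕ → Bool => x a b) := fun a b =>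
      (measurable_pi_apply b).comp (measurable_pi_apply a)
    exact hm _ _ (measurableSet_singleton true)

/-- The coarsening of `B` coded by `x`. -/
noncomputable def code (M : ℕ) (B : Einf) (x : ℕ → ℕ → Bool) : Einf :=
  ⟨Setoid.ker (fun i => lab M x (cidx B i)), by
    have hs : Function.Surjective (fun i => lab M x (cidx B i)) := by
      intro l
      exact ⟨B.mu (sec M l), by simp only [cidx_mu, lab_sec]⟩
    exact Infinite.of_injective _ (Setoid.quotientKerEquivOfSurjective _ hs).symm.injective⟩

lemma code_rel (M : ℕ) (B : Einf) (x : ℕ → ℕ → Bool) (i j : ℕ) :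
    (code M B x).1 i j ↔ lab M x (cidx B i) = lab M x (cidx B j) := Iff.rfl

lemma code_isMin (M : ℕ) (hM : 0 < M) (B : Einf) (x : ℕ → ℕ → Bool) (k : ℕ) :
    IsMinE (code M B x) k ↔ ∃ l, k = B.mu (sec M l) := by
  constructor
  · intro h
    refine ⟨lab M x (cidx B k), le_antisymm ?_ ?_⟩
    · apply h
      rw [code_rel, cidx_mu, lab_sec]
    · exact ((mu_strictMono B).monotone (sec_lab_le M hM x _)).trans (cidx_le B k)
  · rintro ⟨l, rfl⟩ m hm
    rw [code_rel, cidx_mu, lab_sec] at hm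
    rw [← hm]
    exact ((mu_strictMono B).monotone (sec_lab_le M hM x _)).trans (cidx_le B m)

lemma code_mu (M : ℕ) (hM : 0 < M) (B : Einf) (x y : ℕ → ℕ → Bool) (n : ℕ) :
    (code M B x).mu n = (code M B y).mu n := by
  rw [mu_eq, mu_eq]
  congr 1
  ext k
  rw [code_isMin M hM, code_isMin M hM]

lemma measurable_code (M : ℕ) (hM : 0 < M) (B : Einf) : Measurable (code M B) := by
  refine measurable_comap_iff.2 ?_
  refine measurable_pi_lambda _ fun n => measurable_pi_lambda _ fun m => ?_
  refine measurable_to_bool ?_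
  have : (fun x => (toCS ∘ code M B) x n m) ⁻¹' {true} =
      {x | lab M x (cidx B m) = lab M x (cidx B ((code M B fun _ _ => true).mu n))} := by
    ext x
    simp [toCS, code_rel, code_mu M hM B x (fun _ _ => true)]
  rw [this]
  exact measurableSet_eq_fun (measurable_lab _ _) (measurable_lab _ _)

lemma code_mem (m : ℕ) (B : Einf) (x : ℕ → ℕ → Bool) : code (m + 1) B x ∈ cubeM m B := by
  refine ⟨fun i j h => ?_, fun i j hi hj => ?_⟩
  · rw [code_rel, cidx_eq B h]
  · have key : ∀ i, i < m → lab (m + 1) x (cidx B i) = cidx B i := by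
      intro i hi
      have h1 := cidx_le B i
      have h2 := (mu_strictMono B).le_apply (x := cidx B i)
      unfold lab
      rw [if_pos (by omega)]
    rw [code_rel, key i hi, key j hj]
    exact ⟨rel_of_cidx B, cidx_eq B⟩

lemma code_red (M : ℕ) (hM : 0 < M) (B : Einf) (x y : ℕ → ℕ → Bool) :
    E1 x y ↔ E1 (rows (code M B x)) (rows (code M B y)) := by
  constructor
  · rintro ⟨n₀, h⟩
    refine ⟨B.mu (sec M (M + n₀)), fun n j => ?_⟩
    unfold rows
    rw [decide_eq_decide, code_isMin M hM, code_isMin M hM]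
    refine and_congr_right ?_
    rintro ⟨l, hl⟩
    have hle : sec M (M + n₀) ≤ sec M l := by
      rw [← (mu_strictMono B).le_iff_le]
      omega
    have hl2 : M + n₀ ≤ l := by
      unfold sec at hle
      split_ifs at hle <;> omega
    obtain ⟨d, rfl⟩ := Nat.exists_eq_add_of_le hl2
    rw [hl, code_rel, code_rel, cidx_mu, lab_sec, lab_sec, eq_comm,
      eq_comm (b := lab M y _), add_assoc]
    exact ⟨lab_congr M hM x y _ (h d) _, lab_congr M hM y x _ (fun i => (h d i).symm) _⟩
  · rintro ⟨n₀, h⟩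
    refine ⟨n₀, fun n i => ?_⟩
    have h1 : n₀ ≤ B.mu (sec M (M + (n₀ + n))) := by
      refine le_trans ?_ (mu_strictMono B).le_apply
      unfold sec
      split_ifs <;> omega
    obtain ⟨d, hd⟩ := Nat.exists_eq_add_of_le h1
    have h2 := h d (B.mu (M + (2 * Nat.pair (n₀ + n) i + 1)))
    unfold rows at h2
    rw [decide_eq_decide, ← hd, code_isMin M hM, code_isMin M hM, code_rel, code_rel, cidx_mu,
      lab_sec, lab_sec, cidx_mu, lab_odd, lab_odd] at h2
    have h3 : M + (n₀ + n) ≠ 0 := by omega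
    have h4 : ∃ l, B.mu (sec M (M + (n₀ + n))) = B.mu (sec M l) := ⟨_, rfl⟩
    simp only [h4, true_and] at h2
    cases hx : x (n₀ + n) i <;> cases hy : y (n₀ + n) i <;> simp_all

/-- Proposition 1.2: there is a Borel equivalence relation on `𝓔_∞` whose restriction to every
set of the form `[m,B]_∞` is Borel bireducible with `E₁` on `2^{ℕ×ℕ}`. -/
theorem E1_in_spectrum_of_einf :
    ∃ F : Einf → Einf → Prop, Equivalence F ∧
      MeasurableSet {p : Einf × Einf | F p.1 p.2} ∧
      ∀ (m : ℕ) (B : Einf),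
        (∃ f : ↥(cubeM m B) → (ℕ → ℕ → Bool), Measurable f ∧
          ∀ A A' : ↥(cubeM m B), (F A.1 A'.1 ↔ E1 (f A) (f A'))) ∧
        (∃ g : (ℕ → ℕ → Bool) → ↥(cubeM m B), Measurable g ∧
          ∀ x y : ℕ → ℕ → Bool, (E1 x y ↔ F (g x).1 (g y).1)) := by
  refine ⟨fun A A' => E1 (rows A) (rows A'), ?_, ?_, ?_⟩
  · exact ⟨fun A => E1_equiv.refl _, fun h => E1_equiv.symm h, fun h h' => E1_equiv.trans h h'⟩
  · exact ((measurable_rows.comp measurable_fst).prodMk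
      (measurable_rows.comp measurable_snd)) measurableSet_E1
  · intro m B
    refine ⟨⟨fun A => rows A.1, measurable_rows.comp measurable_subtype_coe, fun A A' => Iff.rfl⟩,
      ⟨fun x => ⟨code (m + 1) B x, code_mem m B x⟩, ?_, fun x y => ?_⟩⟩
    · exact (measurable_code (m + 1) (Nat.succ_pos m) B).subtype_mk
    · exact code_red (m + 1) (Nat.succ_pos m) B x y
end

section
/- The equivalence relation E_1 on 2^{ℕ×ℕ} and the equivalence relation E_1^tail restricted to 𝓒𝓢 are Borel bireducible: there is a Borel map f : 𝓒𝓢 → 2^{ℕ×ℕ} with x E_1^tail x' ⇔ f(x) E_1 f(x') for all x, x' ∈ 𝓒𝓢, and there is a Borel map g : 2^{ℕ×ℕ} → 𝓒𝓢 with x E_1 x' ⇔ g(x) E_1^tail g(x') for all x, x' ∈ 2^{ℕ×ℕ}. -/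
/-- The equivalence relation `E₁^tail` on `2^{ℕ×ℕ}`: `x E₁^tail y` iff there are `n_x, n_y` with
`x(n_x+n, m) = y(n_y+n, m)` for all `n, m`. -/
def E1tail (x y : ℕ → ℕ → Bool) : Prop :=
  ∃ nx ny : ℕ, ∀ n m : ℕ, x (nx + n) m = y (ny + n) m

/-- `𝓒𝓢 ⊆ 2^{ℕ×ℕ}`: those `x` whose rows `A_n^x = {m : x(n,m) = 1}` are nonempty, partition `ℕ`,
and are listed in increasing order of their least elements. -/
def CSset : Set (ℕ → ℕ → Bool) :=
  {x | (∀ n : ℕ, ∃ m : ℕ, x n m = true) ∧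
       (∀ m : ℕ, ∃! n : ℕ, x n m = true) ∧
       (∀ n n' : ℕ, n < n' → sInf {m | x n m = true} < sInf {m | x n' m = true})}

/-- The reduction `f`: the row with least element `k` is put at index `k`. -/
def redF (x : ℕ → ℕ → Bool) (k m : ℕ) : Prop :=
  ∃ n, x n k = true ∧ x n m = true ∧ ∀ j < k, x n j = false

/-- Least element of a row. -/
noncomputable def rmin (x : ℕ → ℕ → Bool) (n : ℕ) : ℕ := sInf {m | x n m = true}

/-- The class of `k` in the partition `g x`. -/
def cls (x : ℕ → ℕ → Bool) : ℕ → ℕ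
  | 0 => 0
  | k + 1 => if (Nat.unpair k).2 = 0 ∨ x (Nat.unpair k).1 ((Nat.unpair k).2 - 1) = true
      then (Nat.unpair k).1 + 1 else 0

theorem rmin_mem {x : ℕ → ℕ → Bool} (hx : x ∈ CSset) (n : ℕ) : x n (rmin x n) = true :=
  Nat.sInf_mem (s := {m | x n m = true}) (hx.1 n)

theorem rmin_strictMono {x : ℕ → ℕ → Bool} (hx : x ∈ CSset) : StrictMono (rmin x) :=
  fun n n' h => hx.2.2 n n' h

theorem rmin_lt {x : ℕ → ℕ → Bool} {n j : ℕ} (h : j < rmin x n) : x n j = false := by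
  have := Nat.notMem_of_lt_sInf h
  simpa using this

theorem rmin_eq {x : ℕ → ℕ → Bool} {n k : ℕ} (h : x n k = true) (h' : ∀ j < k, x n j = false) :
    k = rmin x n := by
  apply le_antisymm
  · by_contra hc
    have h1 := h' _ (not_le.mp hc)
    have h2 : x n (rmin x n) = true := Nat.sInf_mem (s := {m | x n m = true}) ⟨k, h⟩
    simp [h1] at h2
  · exact Nat.sInf_le h

theorem redF_iff {x : ℕ → ℕ → Bool} (hx : x ∈ CSset) (k m : ℕ) :
    redF x k m ↔ ∃ n, k = rmin x n ∧ x n m = true := by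
  constructor
  · rintro ⟨n, h1, h2, h3⟩
    exact ⟨n, rmin_eq h1 h3, h2⟩
  · rintro ⟨n, rfl, h2⟩
    exact ⟨n, rmin_mem hx n, h2, fun j hj => rmin_lt hj⟩

theorem redF_rmin {x : ℕ → ℕ → Bool} (hx : x ∈ CSset) (n m : ℕ) :
    redF x (rmin x n) m ↔ x n m = true := by
  rw [redF_iff hx]
  constructor
  · rintro ⟨n', h, h'⟩
    rwa [(rmin_strictMono hx).injective h]
  · exact fun h => ⟨n, rfl, h⟩

theorem redF_forward {x y : ℕ → ℕ → Bool} (hx : x ∈ CSset) (hy : y ∈ CSset) {a b : ℕ}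
    (h : ∀ n m, x (a + n) m = y (b + n) m) {k m : ℕ} (hk : rmin x a ≤ k) (hf : redF x k m) :
    redF y k m := by
  rw [redF_iff hx] at hf
  obtain ⟨n, rfl, hm⟩ := hf
  have hn : a ≤ n := (rmin_strictMono hx).le_iff_le.mp hk
  obtain ⟨d, rfl⟩ := Nat.exists_eq_add_of_le hn
  have : rmin x (a + d) = rmin y (b + d) := by unfold rmin; simp only [h]
  rw [this, redF_rmin hy, ← h]
  exact hm

theorem exists_shift {x : ℕ → ℕ → Bool} (hx : x ∈ CSset) (k₀ : ℕ) :
    ∃ a, ∀ n, k₀ ≤ rmin x n ↔ a ≤ n := by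
  have hex : ∃ n, k₀ ≤ rmin x n := ⟨k₀, (rmin_strictMono hx).le_apply⟩
  classical
  refine ⟨Nat.find hex, fun n => ⟨fun h => Nat.find_min' hex h, fun h => ?_⟩⟩
  exact (Nat.find_spec hex).trans ((rmin_strictMono hx).monotone h)

theorem range_shift {x : ℕ → ℕ → Bool} (hx : x ∈ CSset) {k₀ a : ℕ}
    (ha : ∀ n, k₀ ≤ rmin x n ↔ a ≤ n) :
    Set.range (fun n => rmin x (a + n)) = {k | k₀ ≤ k ∧ ∃ m, redF x k m} := by
  ext k
  constructor
  · rintro ⟨n, rfl⟩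
    exact ⟨(ha _).2 (Nat.le_add_right _ _), rmin x (a + n), (redF_rmin hx _ _).2 (rmin_mem hx _)⟩
  · rintro ⟨hk, m, hm⟩
    obtain ⟨n, rfl, -⟩ := (redF_iff hx _ _).1 hm
    obtain ⟨d, rfl⟩ := Nat.exists_eq_add_of_le ((ha _).1 hk)
    exact ⟨d, rfl⟩

theorem redF_backward {x y : ℕ → ℕ → Bool} (hx : x ∈ CSset) (hy : y ∈ CSset) {k₀ : ℕ}
    (h : ∀ k m, k₀ ≤ k → (redF x k m ↔ redF y k m)) : E1tail x y := by
  obtain ⟨a, ha⟩ := exists_shift hx k₀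
  obtain ⟨b, hb⟩ := exists_shift hy k₀
  have hr : (fun n => rmin x (a + n)) = fun n => rmin y (b + n) := by
    apply (StrictMono.range_inj _ _).1
    · rw [range_shift hx ha, range_shift hy hb]
      ext k
      exact and_congr_right fun hk => exists_congr fun m => h k m hk
    · exact fun i j hij => rmin_strictMono hx (by omega)
    · exact fun i j hij => rmin_strictMono hy (by omega)
  refine ⟨a, b, fun n m => ?_⟩
  rw [Bool.eq_iff_iff, ← redF_rmin hx, ← redF_rmin hy, ← congrFun hr n]
  exact h _ _ ((ha _).2 (Nat.le_add_right _ _))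

theorem measurableSet_coord (n m : ℕ) (b : Bool) :
    MeasurableSet {x : ℕ → ℕ → Bool | x n m = b} :=
  (by fun_prop : Measurable fun x : ℕ → ℕ → Bool => x n m) (measurableSet_singleton b)

theorem measurableSet_redF (k m : ℕ) : MeasurableSet {x : ℕ → ℕ → Bool | redF x k m} := by
  unfold redF
  have : {x : ℕ → ℕ → Bool | ∃ n, x n k = true ∧ x n m = true ∧ ∀ j < k, x n j = false} =
      ⋃ n, ({x | x n k = true} ∩ ({x | x n m = true} ∩ ⋂ j, ⋂ (_ : j < k), {x | x n j = false})) := by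
    ext x
    simp
  rw [this]
  exact MeasurableSet.iUnion fun n => (measurableSet_coord n k true).inter
    ((measurableSet_coord n m true).inter
      (MeasurableSet.iInter fun j => MeasurableSet.iInter fun _ => measurableSet_coord n j false))

theorem cls_pair_zero (x : ℕ → ℕ → Bool) (n : ℕ) : cls x (Nat.pair n 0 + 1) = n + 1 := by
  simp [cls]

theorem cls_pair_succ (x : ℕ → ℕ → Bool) (n m : ℕ) :
    cls x (Nat.pair n (m + 1) + 1) = if x n m = true then n + 1 else 0 := by
  simp [cls]

theorem cls_eq_succ (x : ℕ → ℕ → Bool) (n k : ℕ) : cls x k = n + 1 ↔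
    ∃ j, k = Nat.pair n j + 1 ∧ (j = 0 ∨ x n (j - 1) = true) := by
  constructor
  · intro h
    cases k with
    | zero => simp [cls] at h
    | succ k =>
      simp only [cls] at h
      split_ifs at h with hc
      · obtain rfl : (Nat.unpair k).1 = n := by omega
        exact ⟨_, by simp, hc⟩
  · rintro ⟨j, rfl, h⟩
    simp [cls, h]

theorem sInf_cls_zero (x : ℕ → ℕ → Bool) : sInf {k | cls x k = 0} = 0 :=
  Nat.sInf_eq_zero.2 (Or.inl rfl)

theorem sInf_cls_succ (x : ℕ → ℕ → Bool) (n : ℕ) :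
    sInf {k | cls x k = n + 1} = Nat.pair n 0 + 1 := by
  apply le_antisymm
  · exact Nat.sInf_le (cls_pair_zero x n)
  · apply le_csInf (s := {k | cls x k = n + 1}) ⟨_, cls_pair_zero x n⟩
    intro k hk
    obtain ⟨j, rfl, -⟩ := (cls_eq_succ x n k).1 hk
    have : Nat.pair n 0 ≤ Nat.pair n j := by
      rcases Nat.eq_zero_or_pos j with rfl | hj
      · exact le_rfl
      · exact (Nat.pair_lt_pair_right n hj).le
    omega

/-- The reduction `g`. -/
def redG (x : ℕ → ℕ → Bool) (n k : ℕ) : Bool := decide (cls x k = n)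

theorem redG_mem (x : ℕ → ℕ → Bool) : redG x ∈ CSset := by
  refine ⟨fun n => ?_, fun m => ⟨cls x m, by simp [redG], fun n hn => ?_⟩, fun n n' h => ?_⟩
  · cases n with
    | zero => exact ⟨0, by simp [redG, cls]⟩
    | succ n => exact ⟨_, by simpa [redG] using cls_pair_zero x n⟩
  · simpa [redG, eq_comm] using hn
  · simp only [redG, decide_eq_true_eq]
    obtain ⟨n', rfl⟩ : ∃ l, n' = l + 1 := ⟨n' - 1, by omega⟩
    rw [sInf_cls_succ]
    cases n with
    | zero => rw [sInf_cls_zero]; omega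
    | succ n =>
      rw [sInf_cls_succ]
      have := Nat.pair_lt_pair_left (a₁ := n) (a₂ := n') 0 (by omega)
      omega

theorem measurable_redG : Measurable redG := by
  refine measurable_pi_iff.2 fun n => measurable_pi_iff.2 fun k => ?_
  cases k with
  | zero =>
    have : (fun x => redG x n 0) = fun _ : ℕ → ℕ → Bool => decide (0 = n) := rfl
    rw [this]
    exact measurable_const
  | succ k =>
    have : (fun x => redG x n (k + 1)) =
        (fun b : Bool => decide ((if (Nat.unpair k).2 = 0 ∨ b = true
          then (Nat.unpair k).1 + 1 else 0) = n)) ∘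
        (fun x : ℕ → ℕ → Bool => x (Nat.unpair k).1 ((Nat.unpair k).2 - 1)) := rfl
    rw [this]
    exact (measurable_of_countable _).comp (by fun_prop)

theorem redG_reduces (x y : ℕ → ℕ → Bool) : E1 x y ↔ E1tail (redG x) (redG y) := by
  constructor
  · rintro ⟨a, h⟩
    refine ⟨a + 1, a + 1, fun n m => ?_⟩
    have e : a + 1 + n = (a + n) + 1 := by omega
    rw [Bool.eq_iff_iff]
    simp only [redG, decide_eq_true_eq, e, cls_eq_succ, h]
  · rintro ⟨a, b, h⟩
    have e : ∀ c n, c + (n + 1) = (c + n) + 1 := fun c n => by omega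
    have hab : a = b := by
      have h1 := h 1 (Nat.pair a 0 + 1)
      simp only [redG, cls_pair_zero, decide_true] at h1
      have := of_decide_eq_true h1.symm
      omega
    subst hab
    refine ⟨a, fun n m => ?_⟩
    have h1 := h (n + 1) (Nat.pair (a + n) (m + 1) + 1)
    rw [e] at h1
    simp only [redG, cls_pair_succ] at h1
    cases hx : x (a + n) m <;> cases hy : y (a + n) m <;> simp [hx, hy] at h1 ⊢

/-- Lemma 4.1: `(2^{ℕ×ℕ}, E₁)` and `(𝓒𝓢, E₁^tail)` are Borel bireducible. -/
theorem E1_bireducible_E1tail_on_CS :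
    (∃ f : ↥CSset → (ℕ → ℕ → Bool), Measurable f ∧
      ∀ x x' : ↥CSset, (E1tail x.1 x'.1 ↔ E1 (f x) (f x'))) ∧
    (∃ g : (ℕ → ℕ → Bool) → ↥CSset, Measurable g ∧
      ∀ x y : ℕ → ℕ → Bool, (E1 x y ↔ E1tail (g x).1 (g y).1)) := by
  classical
  refine ⟨⟨fun x k m => decide (redF x.1 k m), ?_, fun x x' => ?_⟩,
    ⟨fun x => ⟨redG x, redG_mem x⟩, measurable_redG.subtype_mk, redG_reduces⟩⟩
  · refine measurable_pi_iff.2 fun k => measurable_pi_iff.2 fun m => ?_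
    apply measurable_to_bool
    have : (fun x : ↥CSset => decide (redF x.1 k m)) ⁻¹' {true} =
        Subtype.val ⁻¹' {x : ℕ → ℕ → Bool | redF x k m} := by
      ext x
      simp
    rw [this]
    exact measurable_subtype_coe (measurableSet_redF k m)
  · constructor
    · rintro ⟨a, b, h⟩
      refine ⟨rmin x.1 a + rmin x'.1 b, fun n m => decide_eq_decide.2 ⟨fun hf => ?_, fun hf => ?_⟩⟩
      · exact redF_forward x.2 x'.2 h (by omega) hf
      · exact redF_forward x'.2 x.2 (fun n m => (h n m).symm) (by omega) hf
    · rintro ⟨k₀, h⟩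
      refine redF_backward x.2 x'.2 (k₀ := k₀) fun k m hk => ?_
      obtain ⟨d, rfl⟩ := Nat.exists_eq_add_of_le hk
      exact decide_eq_decide.1 (h d m)
end

section
/- Let D ∈ 𝓔_∞. Then (𝓔_∞, E_1^tail) is Borel isomorphic to (E_1^tail restricted to [∅,D]): there exists a Borel bijection f : 𝓔_∞ → [∅,D] = {B ∈ 𝓔_∞ : B ≤ D} such that for all A, A' ∈ 𝓔_∞, A E_1^tail A' if and only if f(A) E_1^tail f(A'). -/
open Classical

open Einf

/-- The `n`-th equivalence class of `A ∈ 𝓔_∞` (in the order of least elements):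
the `A`-class of `μ_n(A)`. -/
noncomputable def Eclass (A : Einf) (n : ℕ) : Set ℕ := {m | A.1 m (A.mu n)}

/-- `E₁^tail` on `𝓔_∞` (under the identification with `𝓒𝓢`): `A E₁^tail A'` iff there are
`n, n'` such that for all `j` the `(n+j)`-th class of `A` equals the `(n'+j)`-th class of `A'`. -/
noncomputable def E1tailE (A A' : Einf) : Prop :=
  ∃ n n' : ℕ, ∀ j : ℕ, Eclass A (n + j) = Eclass A' (n' + j)

namespace Einf

lemma infinite_min (A : Einf) : ({k | ∀ m, A.1 m k → k ≤ m} : Set ℕ).Infinite := by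
  have hinf := A.2
  have hex : ∀ q : Quotient A.1, ∃ k, Quotient.mk A.1 k = q ∧ ∀ m, A.1 m k → k ≤ m := by
    intro q
    have h : ∃ k, Quotient.mk A.1 k = q := Quotient.exists_rep q
    refine ⟨Nat.find h, Nat.find_spec h, fun m hm => Nat.find_min' h ?_⟩
    rw [← Nat.find_spec h]
    exact Quotient.sound hm
  choose g hg1 hg2 using hex
  have hinj : Function.Injective g := fun a b hab => by rw [← hg1 a, ← hg1 b, hab]
  exact (Set.infinite_range_of_injective hinj).mono (by rintro _ ⟨q, rfl⟩; exact hg2 q)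

lemma mu_strictMono (A : Einf) : StrictMono A.mu := Nat.nth_strictMono A.infinite_min

lemma mu_min (A : Einf) (n : ℕ) : ∀ m, A.1 m (A.mu n) → A.mu n ≤ m :=
  Nat.nth_mem_of_infinite A.infinite_min n

lemma mem_range_mu (A : Einf) (k : ℕ) (h : ∀ m, A.1 m k → k ≤ m) : k ∈ Set.range A.mu := by
  have := Nat.range_nth_of_infinite A.infinite_min
  have h2 : k ∈ {k | ∀ m, A.1 m k → k ≤ m} := h
  rw [← this] at h2
  exact h2

lemma exists_mu (A : Einf) (m : ℕ) : ∃ n, A.1 m (A.mu n) := by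
  have h : ∃ k, A.1 m k := ⟨m, A.1.refl m⟩
  obtain ⟨n, hn⟩ := A.mem_range_mu (Nat.find h) (fun j hj =>
    Nat.find_min' h (A.1.trans (Nat.find_spec h) (A.1.symm hj)))
  exact ⟨n, by rw [hn]; exact Nat.find_spec h⟩

lemma mu_rel (A : Einf) {n k : ℕ} (h : A.1 (A.mu n) (A.mu k)) : n = k :=
  A.mu_strictMono.injective
    (le_antisymm (A.mu_min n _ (A.1.symm h)) (A.mu_min k _ h))

/-- the index of the class of `m` -/
noncomputable def idx (D : Einf) (m : ℕ) : ℕ := Classical.choose (D.exists_mu m)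

lemma idx_spec (D : Einf) (m : ℕ) : D.1 m (D.mu (D.idx m)) := Classical.choose_spec (D.exists_mu m)

lemma idx_mu (D : Einf) (n : ℕ) : D.idx (D.mu n) = n :=
  (D.mu_rel (D.idx_spec (D.mu n))).symm

lemma idx_eq (D : Einf) {i j : ℕ} (h : D.1 i j) : D.idx i = D.idx j :=
  D.mu_rel (D.1.trans (D.1.symm (D.idx_spec i)) (D.1.trans h (D.idx_spec j)))

/-- pull back `A` along the index map of `D` -/
noncomputable def pull (D A : Einf) : Einf :=
  ⟨Setoid.comap D.idx A.1, by
    have := A.2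
    refine Infinite.of_surjective
      (Quotient.map' (s₂ := A.1) D.idx (fun a b h => h)) ?_
    intro q
    obtain ⟨n, rfl⟩ := Quotient.exists_rep q
    refine ⟨Quotient.mk _ (D.mu n), ?_⟩
    exact congrArg (Quotient.mk A.1) (D.idx_mu n)⟩

lemma pull_rel (D A : Einf) (i j : ℕ) : (pull D A).1 i j ↔ A.1 (D.idx i) (D.idx j) := Iff.rfl

lemma pull_coarsen (D A : Einf) : Coarsen (pull D A) D := by
  intro i j h
  rw [pull_rel, D.idx_eq h]

lemma mu_pull (D A : Einf) (n : ℕ) : (pull D A).mu n = D.mu (A.mu n) := by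
  have key : ∀ i, (∀ m, (pull D A).1 m (D.mu i) → D.mu i ≤ m) ↔ ∀ m, A.1 m i → i ≤ m := by
    intro i
    constructor
    · intro h j hj
      refine D.mu_strictMono.le_iff_le.1 (h _ ?_)
      rw [pull_rel, idx_mu, idx_mu]
      exact hj
    · intro h m hm
      rw [pull_rel, idx_mu] at hm
      exact (D.mu_strictMono.monotone (h _ hm)).trans (D.mu_min _ _ (D.idx_spec m))
  have := Nat.nth_comp_of_strictMono (n := n)
    (p := fun k => ∀ m, (pull D A).1 m k → k ≤ m) D.mu_strictMono
    (fun k hk => D.mem_range_mu k (fun m hm => hk m (pull_coarsen D A m k hm)))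
    (fun hf => absurd hf (pull D A).infinite_min)
  simp only [key] at this
  exact this.symm

lemma eclass_pull (D A : Einf) (n : ℕ) : Eclass (pull D A) n = D.idx ⁻¹' Eclass A n := by
  ext m
  simp only [Eclass, Set.mem_ofPred_eq, Set.mem_preimage, mu_pull, pull_rel, idx_mu]

lemma toCS_pull (D A : Einf) (n m : ℕ) : toCS (pull D A) n m = toCS A n (D.idx m) := by
  simp only [toCS, mu_pull, pull_rel, idx_mu]

lemma measurable_pull (D : Einf) : Measurable (pull D) := by
  have h0 : Measurable toCS := comap_measurable toCS
  refine measurable_comap_iff.2 ?_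
  refine measurable_pi_iff.2 fun n => measurable_pi_iff.2 fun m => ?_
  simp only [Function.comp_apply, toCS_pull]
  exact (measurable_pi_apply (D.idx m)).comp ((measurable_pi_apply n).comp h0)

end Einf

/-- Lemma 4.2: for every `D ∈ 𝓔_∞`, `(𝓔_∞, E₁^tail)` is Borel isomorphic to
`E₁^tail` restricted to `[∅,D] = {B : B ≤ D}`. -/
theorem E1tail_isomorphic_to_restriction (D : Einf) :
    ∃ f : Einf → {B : Einf // Coarsen B D}, Measurable f ∧ Function.Bijective f ∧
      ∀ A A' : Einf, (E1tailE A A' ↔ E1tailE (f A).1 (f A').1) := by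
  have hsurj : Function.Surjective D.idx := fun n => ⟨D.mu n, D.idx_mu n⟩
  refine ⟨fun A => ⟨pull D A, pull_coarsen D A⟩, (measurable_pull D).subtype_mk, ⟨?_, ?_⟩, ?_⟩
  · intro A A' h
    have h' : pull D A = pull D A' := congrArg Subtype.val h
    apply Subtype.ext
    ext i j
    have h1 : (pull D A).1 (D.mu i) (D.mu j) ↔ (pull D A').1 (D.mu i) (D.mu j) := by rw [h']
    simpa only [pull_rel, idx_mu] using h1
  · rintro ⟨B, hB⟩
    have hb : ∀ i, B.1 i (D.mu (D.idx i)) := fun i => hB _ _ (D.idx_spec i)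
    have hinf : Infinite (Quotient (Setoid.comap D.mu B.1)) := by
      have := B.2
      refine Infinite.of_surjective
        (Quotient.map' (s₂ := B.1) D.mu (fun a b h => h)) ?_
      intro q
      obtain ⟨n, rfl⟩ := Quotient.exists_rep q
      exact ⟨Quotient.mk _ (D.idx n), Quotient.sound (B.1.symm (hb n))⟩
    refine ⟨⟨Setoid.comap D.mu B.1, hinf⟩, ?_⟩
    apply Subtype.ext
    apply Subtype.ext
    ext i j
    constructor
    · intro h
      exact B.1.trans (hb i) (B.1.trans h (B.1.symm (hb j)))
    · intro h
      exact B.1.trans (B.1.symm (hb i)) (B.1.trans h (hb j))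
  · intro A A'
    simp only [E1tailE, eclass_pull, hsurj.preimage_injective.eq_iff]
end

section
/- Let f : 𝓔_∞ → 𝓔_∞ be a Borel map. Then there exists a Ramsey conull set 𝓒 ⊆ 𝓔_∞ such that f is tracial on 𝓒, i.e., for every B ∈ 𝓒 there is n₀ ∈ ℕ such that for all n ≥ n₀ and all A, A' ≤ B for which there exist k ∈ ℕ and s ∈ 𝓔_∞^fin with s = r_k(A) = r_k(A') and dom(s) = {0,…,μ_n(B)−1}, one has tr(f(A), B, n) = tr(f(A'), B, n). -/
open Classical

open Einf


namespace CSL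
open Filter

theorem exists_min_left_ideal {S : Type*} [Nonempty S] [Semigroup S] [TopologicalSpace S]
    [CompactSpace S] [T2Space S] (hc : ∀ r : S, Continuous (· * r)) :
    ∃ M : Set S, M.Nonempty ∧ IsClosed M ∧ (∀ x, ∀ y ∈ M, x * y ∈ M) ∧
      ∀ y ∈ M, ∀ z ∈ M, ∃ x ∈ M, x * y = z := by
  let F : Set (Set S) := { N | IsClosed N ∧ N.Nonempty ∧ ∀ x, ∀ y ∈ N, x * y ∈ N }
  rsuffices ⟨N, hN⟩ : ∃ N', Minimal (· ∈ F) N'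
  · obtain ⟨N_closed, N_ne, N_mul⟩ := hN.prop
    refine ⟨N, N_ne, N_closed, N_mul, ?_⟩
    intro m hm z hz
    have scaling_eq_self : (· * m) '' N = N := by
      apply hN.eq_of_subset
      · refine ⟨(hc m).isClosedMap _ N_closed, ⟨_, ⟨m, hm, rfl⟩⟩, ?_⟩
        rintro x _ ⟨m', hm', rfl⟩
        exact ⟨x * m', N_mul _ _ hm', mul_assoc _ _ _⟩
      · rintro _ ⟨m', hm', rfl⟩
        exact N_mul _ _ hm
    rw [← scaling_eq_self] at hz
    exact hz
  refine zorn_superset _ fun c hcs hc => ?_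
  refine
    ⟨⋂₀ c, ⟨isClosed_sInter fun t ht => (hcs ht).1, ?_, fun m m' hm' => ?_⟩, fun s hs =>
      Set.sInter_subset_of_mem hs⟩
  · obtain rfl | hcnemp := c.eq_empty_or_nonempty
    · rw [Set.sInter_empty]
      apply Set.univ_nonempty
    rw [Set.sInter_eq_iInter]
    refine @IsCompact.nonempty_iInter_of_directed_nonempty_isCompact_isClosed _ _ _
        hcnemp.coe_sort ((↑) : c → Set S) ?_ ?_ ?_ ?_
    · refine DirectedOn.directed_val (IsChain.directedOn hc.symm)
    exacts [fun i => (hcs i.prop).2.1, fun i => (hcs i.prop).1.isCompact, fun i => (hcs i.prop).1]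
  · rw [Set.mem_sInter]
    exact fun t ht => (hcs ht).2.2 m m' (Set.mem_sInter.mp hm' t ht)

attribute [local instance] Ultrafilter.mul Ultrafilter.semigroup

/-- substitution of a letter for the variable -/
def sub {L : Type} (a : L) : FreeMonoid (Option L) →* FreeMonoid L :=
  FreeMonoid.map (fun o => o.getD a)

theorem continuous_map {α β : Type*} (g : α → β) :
    Continuous (fun V : Ultrafilter α => V.map g) :=
  ultrafilterBasis_is_basis.continuous_iff.2 <| Set.forall_mem_range.mpr fun s ↦
    ultrafilter_isOpen_basic (g ⁻¹' s)

theorem map_mul' {α β : Type*} [Monoid α] [Monoid β] (g : α →* β) (U V : Ultrafilter α) :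
    (U * V).map g = U.map g * V.map g := by
  apply Ultrafilter.coe_inj.mp
  apply Filter.ext'
  intro p
  rw [Ultrafilter.eventually_mul]
  simp only [Ultrafilter.coe_map, eventually_map]
  rw [Ultrafilter.eventually_mul]
  simp

theorem exists_ultra (L : Type) [Nonempty L] :
    ∃ (W : Ultrafilter (FreeMonoid L)) (V : Ultrafilter (FreeMonoid (Option L))),
      (∀ᶠ v in (V : Filter (FreeMonoid (Option L))), ∃ u, v = FreeMonoid.of (none : Option L) * u) ∧ (∀ a, W * V.map (sub a) = W) ∧
      ∀ a b, V.map (sub a) * V.map (sub b) = V.map (sub a) := by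
  obtain ⟨M, ⟨W, hW⟩, Mcl, Mid, Mmin⟩ :=
    exists_min_left_ideal (S := Ultrafilter (FreeMonoid L)) Ultrafilter.continuous_mul_left
  let R : Set (FreeMonoid (Option L)) := {v | ∃ u, v = FreeMonoid.of none * u}
  let T : Set (Ultrafilter (FreeMonoid (Option L))) :=
    {V | R ∈ V} ∩ ⋂ a : L, {V | V.map (sub a) ∈ M}
  have hTne : T.Nonempty := by
    let ι : FreeMonoid L →* FreeMonoid (Option L) := FreeMonoid.map some
    have hι : ∀ a, ∀ x, sub a (ι x) = x := by
      intro a x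
      have : (sub a).comp ι = MonoidHom.id _ := by
        ext y; simp [sub, ι]
      exact DFunLike.congr_fun this x
    refine ⟨(pure (FreeMonoid.of none) : Ultrafilter _) * W.map ι, ?_, ?_⟩
    · show ∀ᶠ v in ((pure (FreeMonoid.of none) * W.map ι : Ultrafilter _) : Filter _), v ∈ R
      rw [Ultrafilter.eventually_mul]
      simp [R]
    · simp only [Set.mem_iInter, Set.mem_ofPred_eq]
      intro a
      rw [map_mul', Ultrafilter.map_map]
      have : (sub a ∘ ι) = id := by ext1 x; exact hι a x
      rw [this, Ultrafilter.map_id]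
      exact Mid _ _ hW
  have hTcl : IsClosed T := by
    refine (ultrafilter_isClosed_basic R).inter (isClosed_iInter fun a => ?_)
    exact Mcl.preimage (continuous_map _)
  have hTmul : ∀ᵉ (x ∈ T) (y ∈ T), x * y ∈ T := by
    rintro x ⟨hx, hx'⟩ y ⟨hy, hy'⟩
    refine ⟨?_, ?_⟩
    · show ∀ᶠ v in ((x * y : Ultrafilter _) : Filter _), v ∈ R
      rw [Ultrafilter.eventually_mul]
      filter_upwards [hx] with v hv
      obtain ⟨u, rfl⟩ := hv
      exact Eventually.of_forall fun m => ⟨u * m, mul_assoc _ _ _⟩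
    · simp only [Set.mem_iInter, Set.mem_ofPred_eq] at *
      intro a
      rw [map_mul']
      exact Mid _ _ (hy' a)
  obtain ⟨V, hV, hVV⟩ := exists_idempotent_in_compact_subsemigroup
    Ultrafilter.continuous_mul_left T hTne hTcl.isCompact hTmul
  obtain ⟨hV1, hV2⟩ := hV
  simp only [Set.mem_iInter, Set.mem_ofPred_eq] at hV2
  have key : ∀ Y ∈ M, ∀ a, Y * V.map (sub a) = Y := by
    intro Y hY a
    obtain ⟨x, hx, rfl⟩ := Mmin _ (hV2 a) Y hY
    rw [mul_assoc, ← map_mul', hVV]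
  exact ⟨W, V, hV1, key W hW, fun a b => key _ (hV2 a) b⟩

theorem exists_star (L : Type) [Finite L] [Nonempty L] (c : List L → Prop) :
    ∃ (e : Prop) (P : Set (List L)), (∀ w ∈ P, c w ↔ e) ∧ P.Nonempty ∧
      ∀ F : Set (List L), F.Finite → F ⊆ P →
        ∃ u : List (Option L), ∀ w ∈ F, ∀ a : L,
          w ++ a :: u.map (fun o => o.getD a) ∈ P := by
  obtain ⟨W, V, hR, hW, hV⟩ := exists_ultra L
  obtain ⟨c', hc'⟩ : ∃ c' : FreeMonoid L → Prop, ∀ w : List L, c' (FreeMonoid.ofList w) = c w :=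
    ⟨fun w => c w.toList, fun _ => rfl⟩
  have h1 : ∃ e : Prop, ∀ᶠ w in W, (c' w ↔ e) := by
    by_cases h : ∀ᶠ w in W, c' w
    · exact ⟨True, by simpa using h⟩
    · rw [← Ultrafilter.eventually_not] at h
      exact ⟨False, by simpa using h⟩
  obtain ⟨e, he⟩ := h1
  let P : Set (FreeMonoid L) := {w | (c' w ↔ e) ∧ ∀ a, ∀ᶠ v in V, (c' (w * sub a v) ↔ e)}
  have step : ∀ w ∈ P, ∀ᶠ v in V, ∀ a, w * sub a v ∈ P := by
    intro w hw
    rw [eventually_all]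
    intro a
    refine (hw.2 a).and ?_
    rw [eventually_all]
    intro b
    have h2 : ∀ᶠ y in V.map (sub a), (c' (w * y) ↔ e) := hw.2 a
    rw [← hV a b, Ultrafilter.eventually_mul] at h2
    have h3 : ∀ᶠ v in V, ∀ᶠ z in V, (c' (w * (sub a v * sub b z)) ↔ e) := h2
    simpa only [mul_assoc] using h3
  have hP : ∀ᶠ w in W, w ∈ P := by
    refine he.and ?_
    rw [eventually_all]
    intro a
    rw [← hW a, Ultrafilter.eventually_mul] at he
    exact he
  refine ⟨e, P, fun w hw => by rw [← hc']; exact hw.1, hP.exists, ?_⟩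
  intro F hF hFP
  have : ∀ᶠ v in V, ∀ w ∈ F, ∀ a, (show FreeMonoid L from w) * sub a v ∈ P := by
    rw [hF.eventually_all]
    exact fun w hw => step w (hFP hw)
  obtain ⟨v, ⟨u, rfl⟩, hv⟩ := (hR.and this).exists
  exact ⟨u, fun w hw a => hv w hw a⟩

theorem carlson_simpson (L : Type) [Finite L] [Nonempty L] (c : List L → Prop) :
    ∃ (e : Prop) (N : ℕ → ℕ) (W : ℕ → L ⊕ ℕ), StrictMono N ∧ (∀ j, W (N j) = Sum.inr j) ∧
      (∀ i j, W i = Sum.inr j → N j ≤ i) ∧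
      ∀ j (a : ℕ → L), c ((List.range (N j)).map (fun i => Sum.elim id a (W i))) ↔ e := by
  obtain ⟨e, P, hPe, ⟨w0, hw0⟩, hstep⟩ := exists_star L c
  let ev (a : ℕ → L) (x : List (L ⊕ ℕ)) : List L := x.map (Sum.elim id a)
  have st : ∀ (j : ℕ) (x : {x : List (L ⊕ ℕ) // ∀ a, ev a x ∈ P}),
      ∃ y : {x : List (L ⊕ ℕ) // ∀ a, ev a x ∈ P}, ∃ z : List (L ⊕ ℕ),
        y.1 = x.1 ++ Sum.inr j :: z ∧ ∀ i, Sum.inr i ∈ z → i = j := by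
    rintro j ⟨x, hx⟩
    obtain ⟨u, hu⟩ := hstep (Set.range fun a => ev a x)
      ((List.finite_length_eq L x.length).subset (by rintro _ ⟨a, rfl⟩; simp [ev]))
      (by rintro _ ⟨a, rfl⟩; exact hx a)
    let z : List (L ⊕ ℕ) := u.map (fun o => o.elim (Sum.inr j) Sum.inl)
    refine ⟨⟨x ++ Sum.inr j :: z, ?_⟩, z, rfl, ?_⟩
    · intro a
      have := hu _ ⟨a, rfl⟩ (a j)
      convert this using 1
      simp only [ev, z, List.map_append, List.map_cons, List.map_map, Sum.elim_inr]
      congr 2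
      apply List.map_congr_left
      intro o _
      cases o <;> rfl
    · intro i hi
      simp only [z, List.mem_map] at hi
      obtain ⟨o, _, ho⟩ := hi
      cases o <;> simp at ho
      exact ho.symm
  choose nxt z hz1 hz2 using st
  let x0 : {x : List (L ⊕ ℕ) // ∀ a, ev a x ∈ P} :=
    ⟨w0.map Sum.inl, by intro a; simpa [ev, Function.comp_def] using hw0⟩
  let X : ℕ → {x : List (L ⊕ ℕ) // ∀ a, ev a x ∈ P} := fun n => Nat.rec x0 nxt n
  have hX : ∀ n, (X (n+1)).1 = (X n).1 ++ Sum.inr n :: z n (X n) := fun n => hz1 n (X n)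
  let N : ℕ → ℕ := fun n => (X n).1.length
  have hN : StrictMono N := strictMono_nat_of_lt_succ fun n => by
    simp [N, hX]
  have hpre : ∀ m n, m ≤ n → (X m).1 <+: (X n).1 := by
    intro m n h
    induction n, h using Nat.le_induction with
    | base => exact List.prefix_rfl
    | succ n _ ih => exact ih.trans (by rw [hX]; exact List.prefix_append _ _)
  have hlen : ∀ i, i < (X (i+1)).1.length := fun i => lt_of_lt_of_le (Nat.lt_succ_self i) (hN.id_le (i+1))
  let Wd : ℕ → L ⊕ ℕ := fun i => (X (i+1)).1[i]'(hlen i)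
  have hWd : ∀ n i (h : i < (X n).1.length), Wd i = (X n).1[i] := by
    intro n i h
    rcases le_total n (i+1) with h' | h'
    · exact ((hpre _ _ h').getElem h).symm
    · exact ((hpre _ _ h').getElem (hlen i))
  refine ⟨e, N, Wd, hN, ?_, ?_, ?_⟩
  · intro j
    rw [hWd (j+1) (N j) (by simp [N, hX])]
    simp [hX, N]
  · have hmem : ∀ n i j (h : i < (X n).1.length), (X n).1[i] = Sum.inr j → N j ≤ i := by
      intro n
      induction n with
      | zero =>
        intro i j h h'
        simp [X, x0] at h'
      | succ n ih =>
        intro i j h h'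
        by_cases hi : i < (X n).1.length
        · apply ih i j hi
          exact (hWd n i hi).symm.trans ((hWd (n+1) i h).trans h')
        · have h2 : (X (n+1)).1[i] ∈ Sum.inr n :: z n (X n) := by
            have : i - (X n).1.length < (Sum.inr n :: z n (X n)).length := by
              simp [hX] at h ⊢; omega
            have h3 : (X (n+1)).1[i] = (Sum.inr n :: z n (X n))[i - (X n).1.length] := by
              simp only [hX]
              rw [List.getElem_append_right (by omega)]
            rw [h3]; exact List.getElem_mem _
          rw [h', List.mem_cons] at h2
          have : j = n := by
            rcases h2 with h2 | h2
            · exact Sum.inr.inj h2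
            · exact hz2 n (X n) j h2
          subst this
          simp only [N]; omega
    intro i j h
    exact hmem (i+1) i j (hlen i) h
  · intro j a
    rw [← hPe _ ((X j).2 a)]
    have : (List.range (N j)).map (fun i => Sum.elim id a (Wd i)) = ev a (X j).1 := by
      apply List.ext_getElem
      · simp [ev, N]
      · intro i h1 h2
        simp only [ev, List.getElem_map, List.getElem_range]
        rw [hWd j i (by simpa [N] using h1)]
    rw [this]
end CSL

namespace Einf

/-- `k` is the least element of its class. -/
def Mn (A : Einf) (k : ℕ) : Prop := ∀ m, A.1 m k → k ≤ m

/-- `A` and `B` agree below `k`. -/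
def Agr (k : ℕ) (A B : Einf) : Prop := ∀ i < k, ∀ j < k, (A.1 i j ↔ B.1 i j)

theorem Agr.rfl' {k : ℕ} {A : Einf} : Agr k A A := fun _ _ _ _ => Iff.rfl
theorem Agr.symm {k : ℕ} {A B : Einf} (h : Agr k A B) : Agr k B A :=
  fun i hi j hj => (h i hi j hj).symm
theorem Agr.trans {k : ℕ} {A B C : Einf} (h : Agr k A B) (h' : Agr k B C) : Agr k A C :=
  fun i hi j hj => (h i hi j hj).trans (h' i hi j hj)
theorem Agr.mono {k l : ℕ} {A B : Einf} (h : Agr k A B) (hl : l ≤ k) : Agr l A B :=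
  fun i hi j hj => h i (hi.trans_le hl) j (hj.trans_le hl)

theorem Coarsen.rfl' {A : Einf} : Coarsen A A := fun _ _ h => h
theorem Coarsen.trans {A B C : Einf} (h : Coarsen A B) (h' : Coarsen B C) : Coarsen A C :=
  fun i j hij => h i j (h' i j hij)

theorem exists_rel (A : Einf) (x : ℕ) : ∃ m, A.1 m x := ⟨x, A.1.refl x⟩

/-- least element of the class of `x` -/
noncomputable def rep (A : Einf) (x : ℕ) : ℕ := Nat.find (A.exists_rel x)

theorem rel_rep (A : Einf) (x : ℕ) : A.1 (A.rep x) x := Nat.find_spec (A.exists_rel x)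
theorem rep_le_of_rel {A : Einf} {m x : ℕ} (h : A.1 m x) : A.rep x ≤ m := Nat.find_min' _ h
theorem rep_le (A : Einf) (x : ℕ) : A.rep x ≤ x := rep_le_of_rel (A.1.refl x)
theorem rep_eq_iff {A : Einf} {x y : ℕ} : A.rep x = A.rep y ↔ A.1 x y := by
  constructor
  · intro h
    have h1 := A.rel_rep x
    rw [h] at h1
    exact A.1.trans (A.1.symm h1) (A.rel_rep y)
  · intro h
    apply le_antisymm
    · exact rep_le_of_rel (A.1.trans (A.rel_rep y) (A.1.symm h))
    · exact rep_le_of_rel (A.1.trans (A.rel_rep x) h)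
theorem Mn.rep_eq {A : Einf} {k : ℕ} (h : A.Mn k) : A.rep k = k :=
  le_antisymm (A.rep_le k) (h _ (A.rel_rep k))
theorem mn_of_rep_eq {A : Einf} {k : ℕ} (h : A.rep k = k) : A.Mn k :=
  fun m hm => by
    have := rep_le_of_rel hm
    omega
theorem rep_rep (A : Einf) (x : ℕ) : A.rep (A.rep x) = A.rep x := rep_eq_iff.2 (A.rel_rep x)
theorem mn_rep (A : Einf) (x : ℕ) : A.Mn (A.rep x) := mn_of_rep_eq (A.rep_rep x)
theorem Mn.of_coarsen {A B : Einf} {k : ℕ} (h : A.Mn k) (hAB : Coarsen A B) : B.Mn k :=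
  fun m hm => h m (hAB _ _ hm)
theorem rep_coarsen {A B : Einf} (h : Coarsen A B) (x : ℕ) : A.rep (B.rep x) = A.rep x :=
  rep_eq_iff.2 (h _ _ (B.rel_rep x))

theorem Mn.of_agr {A B : Einf} {k l : ℕ} (h : A.Mn k) (hAB : Agr l A B) (hl : k < l) : B.Mn k := by
  intro m hm
  by_contra hlt
  push Not at hlt
  have := h m ((hAB m (hlt.trans hl) k hl).2 hm)
  omega

theorem infinite_mn (A : Einf) : {m | A.Mn m}.Infinite := by
  have := A.2
  let g : Quotient A.1 → ℕ := Quotient.lift A.rep (fun a b h => rep_eq_iff.2 h)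
  have hg : Function.Injective g := by
    intro a b
    induction a using Quotient.inductionOn
    induction b using Quotient.inductionOn
    intro h
    exact Quotient.sound (rep_eq_iff.1 h)
  refine (Set.infinite_range_of_injective hg).mono ?_
  rintro _ ⟨a, rfl⟩
  induction a using Quotient.inductionOn
  exact A.mn_rep _

theorem exists_mn_gt (A : Einf) (N : ℕ) : ∃ m, N < m ∧ A.Mn m := by
  obtain ⟨m, hm, hm'⟩ := A.infinite_mn.exists_gt N
  exact ⟨m, hm', hm⟩

theorem of_ker_infinite {s : Setoid ℕ} (h : ∀ N, ∃ m, N < m ∧ ∀ l, s l m → m ≤ l) :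
    Infinite (Quotient s) := by
  have hinf : {m | ∀ l, s l m → m ≤ l}.Infinite := by
    rw [Set.infinite_iff_exists_gt]
    intro N
    obtain ⟨m, h1, h2⟩ := h N
    exact ⟨m, h2, h1⟩
  have : Infinite {m | ∀ l, s l m → m ≤ l} := hinf.to_subtype
  refine Infinite.of_injective (fun m : {m | ∀ l, s l m → m ≤ l} => Quotient.mk s m.1) ?_
  intro a b hab
  have h1 : s a.1 b.1 := Quotient.exact hab
  exact Subtype.ext (le_antisymm (a.2 _ (s.symm h1)) (b.2 _ h1))

/-- the kernel of a map with `g x ≤ x`, `g (g x) = g x` and infinitely many fixed points -/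
def mkKer (g : ℕ → ℕ) (h1 : ∀ x, g x ≤ x) (h2 : ∀ N, ∃ m, N < m ∧ g m = m) : Einf :=
  ⟨Setoid.ker g, of_ker_infinite (fun N => by
    obtain ⟨m, hm, hm'⟩ := h2 N
    refine ⟨m, hm, fun l hl => ?_⟩
    have : g l = g m := hl
    have := h1 l
    omega)⟩

theorem mkKer_rel {g : ℕ → ℕ} {h1 h2} {i j : ℕ} : (mkKer g h1 h2).1 i j ↔ g i = g j := Iff.rfl

theorem mkKer_mn {g : ℕ → ℕ} {h1 h2} {m : ℕ} (h : g m = m) : (mkKer g h1 h2).Mn m := by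
  intro l hl
  rw [mkKer_rel] at hl
  have := h1 l
  omega

/-- The cube `[C ↾ k, A]`. -/
def Cub (k : ℕ) (C A : Einf) : Set Einf := {B | B.Mn k ∧ Agr k B C ∧ Coarsen B A}

theorem cub_mono {k : ℕ} {C A B : Einf} (h : Coarsen B A) : Cub k C B ⊆ Cub k C A :=
  fun _ hD => ⟨hD.1, hD.2.1, hD.2.2.trans h⟩

theorem cub_congr {k : ℕ} {C C' A : Einf} (h : Agr k C C') : Cub k C A = Cub k C' A := by
  ext D
  exact ⟨fun hD => ⟨hD.1, hD.2.1.trans h, hD.2.2⟩, fun hD => ⟨hD.1, hD.2.1.trans h.symm, hD.2.2⟩⟩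

theorem cub_sub {k : ℕ} {B C A : Einf} (h : B ∈ Cub k C A) : Cub k B B ⊆ Cub k C A := by
  rw [cub_congr h.2.1]
  exact cub_mono h.2.2

theorem self_mem_cub {k : ℕ} {A : Einf} (h : A.Mn k) : A ∈ Cub k A A := ⟨h, Agr.rfl', Coarsen.rfl'⟩

theorem amalg {k : ℕ} {A C B : Einf} (hB : B ∈ Cub k C A) :
    ∃ B' ∈ Cub k A A, Cub k C B' ⊆ Cub k C B := by
  obtain ⟨hBk, hBC, hBA⟩ := hB
  let g : ℕ → ℕ := fun x => if A.rep x < k then A.rep x else B.rep x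
  have g1 : ∀ x, A.rep x < k → g x = A.rep x := fun x h => if_pos h
  have g2 : ∀ x, ¬ A.rep x < k → g x = B.rep x := fun x h => if_neg h
  have hle : ∀ x, g x ≤ x := by
    intro x
    by_cases h : A.rep x < k
    · rw [g1 x h]; exact A.rep_le x
    · rw [g2 x h]; exact B.rep_le x
  have hfixB : ∀ m, B.Mn m → g m = m := by
    intro m hm
    by_cases h : A.rep m < k
    · rw [g1 m h]; exact (hm.of_coarsen hBA).rep_eq
    · rw [g2 m h]; exact hm.rep_eq
  have hidem : ∀ x, g (g x) = g x := by
    intro x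
    by_cases h : A.rep x < k
    · rw [g1 x h, g1 _ (by rwa [A.rep_rep]), A.rep_rep]
    · rw [g2 x h]; exact hfixB _ (B.mn_rep x)
  have hgB : ∀ x, B.1 x (g x) := by
    intro x
    by_cases h : A.rep x < k
    · rw [g1 x h]; exact hBA _ _ (A.1.symm (A.rel_rep x))
    · rw [g2 x h]; exact B.1.symm (B.rel_rep x)
  let B' := mkKer g hle (fun N => by
    obtain ⟨m, h1, h2⟩ := B.exists_mn_gt N
    exact ⟨m, h1, hfixB m h2⟩)
  refine ⟨B', ⟨mkKer_mn (hfixB k hBk), ?_, ?_⟩, ?_⟩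
  · intro i hi j hj
    rw [mkKer_rel, g1 i ((A.rep_le i).trans_lt hi), g1 j ((A.rep_le j).trans_lt hj), rep_eq_iff]
  · intro i j hij
    have h1 : A.rep i = A.rep j := rep_eq_iff.2 hij
    have h2 : B.rep i = B.rep j := rep_eq_iff.2 (hBA _ _ hij)
    rw [mkKer_rel]
    simp only [g, h1, h2]
  · rintro D ⟨hDk, hDC, hDB'⟩
    refine ⟨hDk, hDC, ?_⟩
    have hDg : ∀ x, D.1 x (g x) := fun x => hDB' _ _ (mkKer_rel.2 (hidem x).symm)
    have main : ∀ i j, B.1 i j → g i ≤ g j → D.1 i j := by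
      intro i j hij hle'
      have hgg : B.1 (g i) (g j) := B.1.trans (B.1.symm (hgB i)) (B.1.trans hij (hgB j))
      have : D.1 (g i) (g j) := by
        by_cases hj : g j < k
        · exact (hDC _ (by omega) _ hj).2 ((hBC _ (by omega) _ hj).1 hgg)
        · have hj2 : g j = B.rep j := by
            by_cases h : A.rep j < k
            · rw [g1 j h] at hj; exact absurd h hj
            · exact g2 j h
          have h3 : B.rep j ≤ g i := rep_le_of_rel (B.1.trans (B.1.symm (hgB i)) hij)
          have : g i = g j := by omega
          rw [this]
      exact D.1.trans (hDg i) (D.1.trans this (D.1.symm (hDg j)))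
    intro i j hij
    rcases le_total (g i) (g j) with h | h
    · exact main i j hij h
    · exact D.1.symm (main j i (B.1.symm hij) h)

section Fusion
variable (Q : ℕ → Set Einf → Prop)

theorem fusion_step (hanti : ∀ k S T, S ⊆ T → Q k T → Q k S)
    (hden : ∀ k (C : Einf), C.Mn k → ∃ B ∈ Cub k C C, Q k (Cub k B B))
    (k : ℕ) (A : Einf) (hA : A.Mn k) :
    ∃ B ∈ Cub k A A, ∀ C, Coarsen C B → C.Mn k → Q k (Cub k C B) := by
  have key : ∀ F : Set (Setoid (Fin k)), F.Finite → ∃ B ∈ Cub k A A, ∀ C, Coarsen C B → C.Mn k →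
      (Setoid.comap (fun i : Fin k => (i : ℕ)) C.1) ∈ F → Q k (Cub k C B) := by
    intro F hF
    induction F, hF using Set.Finite.induction_on with
    | empty => exact ⟨A, self_mem_cub hA, fun C _ _ h => absurd h (Set.notMem_empty _)⟩
    | @insert σ F _ _ ih =>
      obtain ⟨B, hB, hBF⟩ := ih
      by_cases hex : ∃ C, Coarsen C B ∧ C.Mn k ∧
          Setoid.comap (fun i : Fin k => (i : ℕ)) C.1 = σ
      · obtain ⟨C, hCB, hCk, hCσ⟩ := hex
        obtain ⟨D, hD, hQ⟩ := hden k C hCk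
        have hD' : D ∈ Cub k C B := cub_mono hCB hD
        obtain ⟨B', hB', hsub⟩ := amalg hD'
        refine ⟨B', cub_sub hB hB', ?_⟩
        intro C' hC' hC'k hmem
        rcases hmem with hmem | hmem
        · have hag : Agr k C' C := by
            intro i hi j hj
            have h0 := hmem.trans hCσ.symm
            have := congrArg (fun s : Setoid (Fin k) => s ⟨i, hi⟩ ⟨j, hj⟩) h0
            exact iff_of_eq this
          rw [cub_congr hag]
          refine hanti k _ _ hsub ?_
          rwa [← cub_congr hD.2.1]
        · exact hanti k _ _ (cub_mono hB'.2.2) (hBF C' (hC'.trans hB'.2.2) hC'k hmem)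
      · refine ⟨B, hB, ?_⟩
        intro C' hC' hC'k hmem
        rcases hmem with hmem | hmem
        · exact absurd ⟨C', hC', hC'k, hmem⟩ hex
        · exact hBF C' hC' hC'k hmem
  have : Finite (Setoid (Fin k)) := by
    refine Finite.of_injective (fun s : Setoid (Fin k) => fun i j => s i j) ?_
    intro s t h
    ext i j
    exact iff_of_eq (congrFun (congrFun h i) j)
  obtain ⟨B, hB, h⟩ := key Set.univ Set.finite_univ
  exact ⟨B, hB, fun C h1 h2 => h C h1 h2 (Set.mem_univ _)⟩

/-- next minimum after `k` -/
noncomputable def nx (A : Einf) (k : ℕ) : ℕ := Nat.find (A.exists_mn_gt k)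
theorem lt_nx (A : Einf) (k : ℕ) : k < A.nx k := (Nat.find_spec (A.exists_mn_gt k)).1
theorem mn_nx (A : Einf) (k : ℕ) : A.Mn (A.nx k) := (Nat.find_spec (A.exists_mn_gt k)).2
theorem nx_le {A : Einf} {k m : ℕ} (h : k < m) (hm : A.Mn m) : A.nx k ≤ m :=
  Nat.find_min' _ ⟨h, hm⟩

theorem fusion (hanti : ∀ k S T, S ⊆ T → Q k T → Q k S)
    (hden : ∀ k (C : Einf), C.Mn k → ∃ B ∈ Cub k C C, Q k (Cub k B B))
    (k : ℕ) (A : Einf) (hA : A.Mn k) :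
    ∃ B ∈ Cub k A A, ∀ m ≥ k, ∀ C, Coarsen C B → C.Mn m → Q m (Cub m C B) := by
  have st : ∀ x : {x : ℕ × Einf // x.2.Mn x.1}, ∃ y : {x : ℕ × Einf // x.2.Mn x.1},
      y.1.2 ∈ Cub x.1.1 x.1.2 x.1.2 ∧ y.1.1 = y.1.2.nx x.1.1 ∧
      ∀ C, Coarsen C y.1.2 → C.Mn x.1.1 → Q x.1.1 (Cub x.1.1 C y.1.2) := by
    rintro ⟨⟨k, A⟩, hA⟩
    obtain ⟨B, hB, h⟩ := fusion_step Q hanti hden k A hA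
    exact ⟨⟨⟨B.nx k, B⟩, B.mn_nx k⟩, hB, rfl, h⟩
  choose nxt hn1 hn2 hn3 using st
  let X : ℕ → {x : ℕ × Einf // x.2.Mn x.1} := fun n => Nat.rec ⟨(k, A), hA⟩ (fun _ => nxt) n
  let K : ℕ → ℕ := fun n => (X n).1.1
  let E : ℕ → Einf := fun n => (X n).1.2
  have hE : ∀ n, E (n+1) ∈ Cub (K n) (E n) (E n) := fun n => hn1 (X n)
  have hK : ∀ n, K (n+1) = (E (n+1)).nx (K n) := fun n => hn2 (X n)
  have hQ : ∀ n, ∀ C, Coarsen C (E (n+1)) → C.Mn (K n) → Q (K n) (Cub (K n) C (E (n+1))) :=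
    fun n => hn3 (X n)
  have hKmono : StrictMono K := strictMono_nat_of_lt_succ fun n => by rw [hK]; exact lt_nx _ _
  have hco : ∀ m n, m ≤ n → Coarsen (E n) (E m) := by
    intro m n h
    induction n, h using Nat.le_induction with
    | base => exact Coarsen.rfl'
    | succ n _ ih => exact (hE n).2.2.trans ih
  have hag : ∀ m n, m ≤ n → Agr (K m) (E n) (E m) := by
    intro m n h
    induction n, h using Nat.le_induction with
    | base => exact Agr.rfl'
    | succ n hmn ih => exact ((hE n).2.1.mono (hKmono.monotone hmn)).trans ih
  have hKid : ∀ n, n ≤ K n := hKmono.id_le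
  -- the limit
  have hlim : ∀ n i j, i < K n → j < K n → ∀ m, n ≤ m → ((E m).1 i j ↔ (E n).1 i j) :=
    fun n i j hi hj m hm => hag n m hm i hi j hj
  have hrel : ∀ N i j, i < K N → j < K N → ((E (max i j + 1)).1 i j ↔ (E N).1 i j) := by
    intro N i j hi hj
    have h1 := hKid (max i j + 1)
    rcases le_total N (max i j + 1) with h | h
    · exact hlim N i j hi hj _ h
    · exact (hlim _ i j (by omega) (by omega) _ h).symm
  let s : Setoid ℕ :=
    { r := fun i j => (E (max i j + 1)).1 i j
      iseqv := by
        refine ⟨fun i => (E (max i i + 1)).1.refl' i, fun {i j} h => ?_, fun {i j l} h1 h2 => ?_⟩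
        · rw [max_comm]; exact (E (max i j + 1)).1.symm' h
        · have hh := hKid (i + j + l + 1)
          rw [hrel (i + j + l + 1) _ _ (by omega) (by omega)] at h1 h2 ⊢
          exact (E (i + j + l + 1)).1.trans' h1 h2 }
  have hs : ∀ N i j, i < K N → j < K N → (s i j ↔ (E N).1 i j) := hrel
  have hEmn : ∀ n, (E n).Mn (K n) := fun n => (X n).2
  have hsm : ∀ n l, s l (K n) → K n ≤ l := by
    intro n l hl
    by_contra hlt
    push Not at hlt
    have h1 : K n < K (n+1) := hKmono (Nat.lt_succ_self n)
    rw [hs (n+1) l (K n) (by omega) h1] at hl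
    have := (hE n).1 l hl
    omega
  let B : Einf := ⟨s, of_ker_infinite (fun N => ⟨K (N+1), hKid (N+1), hsm (N+1)⟩)⟩
  have hBag : ∀ n, Agr (K n) B (E n) := fun n i hi j hj => hs n i j hi hj
  have hBmn : ∀ n, B.Mn (K n) := hsm
  have hBco : ∀ n, Coarsen B (E n) := by
    intro n i j hij
    have hh := hKid (i + j + n + 1)
    exact (hs (i + j + n + 1) i j (by omega) (by omega)).2 (hco n (i + j + n + 1) (by omega) i j hij)
  refine ⟨B, ⟨hBmn 0, hBag 0, hBco 0⟩, ?_⟩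
  intro m hm C hC hCm
  have hBm : B.Mn m := hCm.of_coarsen hC
  obtain ⟨n, rfl⟩ : ∃ n, m = K n := by
    have hex : ∃ n, m < K n := ⟨m + 1, hKid (m+1)⟩
    obtain ⟨hf, hmin⟩ := And.intro (Nat.find_spec hex) (fun l (hl : l < Nat.find hex) => Nat.find_min hex hl)
    generalize Nat.find hex = N at hf hmin
    cases N with
    | zero => exact absurd hf (not_lt.2 hm)
    | succ n =>
      have h1 := hmin n (Nat.lt_succ_self n)
      refine ⟨n, ?_⟩
      by_contra hne
      have h2 : (E (n+1)).Mn m := hBm.of_agr (hBag (n+1)) hf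
      have h3 := nx_le (k := K n) (by omega) h2
      rw [← hK] at h3
      omega
  exact hanti _ _ _ (cub_mono (hBco (n+1))) (hQ n C (hC.trans (hBco (n+1))) hCm)
end Fusion

theorem pigeon (col : ℕ → Einf → Prop) (hcol : ∀ m D D', Agr m D D' → (col m D ↔ col m D'))
    (k : ℕ) (C : Einf) (hC : C.Mn k) :
    ∃ B ∈ Cub k C C, (∀ D ∈ Cub k B B, col (D.nx k) D) ∨ (∀ D ∈ Cub k B B, ¬ col (D.nx k) D) := by
  let p : ℕ → ℕ := Nat.nth (fun m => k < m ∧ C.Mn m)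
  have hinf : {m | k < m ∧ C.Mn m}.Infinite := by
    rw [Set.infinite_iff_exists_gt]
    intro N
    obtain ⟨m, h1, h2⟩ := C.exists_mn_gt (max N k)
    exact ⟨m, ⟨by omega, h2⟩, by omega⟩
  have hpm : StrictMono p := Nat.nth_strictMono hinf
  have hpk : ∀ i, k < p i := fun i => (Nat.nth_mem_of_infinite hinf i).1
  have hpC : ∀ i, C.Mn (p i) := fun i => (Nat.nth_mem_of_infinite hinf i).2
  have hpsurj : ∀ m, k < m → C.Mn m → ∃ i, p i = m :=
    fun m h1 h2 => ⟨_, Nat.nth_count (p := fun m => k < m ∧ C.Mn m) ⟨h1, h2⟩⟩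
  let L : Type := {x : ℕ // x ≤ k ∧ C.Mn x}
  have : Finite L := ((Set.finite_Iic k).subset (fun x hx => hx.1) :
    {x : ℕ | x ≤ k ∧ C.Mn x}.Finite)
  have : Nonempty L := ⟨⟨k, le_rfl, hC⟩⟩
  -- members of the cube
  have hold : ∀ D ∈ Cub k C C, ∀ y, y ≤ k → C.Mn y → D.rep y = y := by
    rintro D ⟨hDk, hDC, hD⟩ y hy hyC
    rcases hy.lt_or_eq with h | h
    · have h1 := D.rep_le y
      have h2 := (hDC _ (h1.trans_lt h) _ h).1 (D.rel_rep y)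
      exact le_antisymm h1 (hyC _ h2)
    · rw [h]; exact hDk.rep_eq
  have hcase : ∀ x, (C.rep x ≤ k ∧ C.Mn (C.rep x)) ∨ ∃ i, p i = C.rep x := by
    intro x
    by_cases h : C.rep x ≤ k
    · exact Or.inl ⟨h, C.mn_rep x⟩
    · exact Or.inr (hpsurj _ (not_le.1 h) (C.mn_rep x))
  have hagree : ∀ n, ∀ D ∈ Cub k C C, ∀ D' ∈ Cub k C C,
      (∀ i < n, D.rep (p i) = D'.rep (p i)) → Agr (p n) D D' := by
    intro n D hD D' hD' h
    have h1 : ∀ x < p n, D.rep x = D'.rep x := by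
      intro x hx
      rw [← rep_coarsen hD.2.2, ← rep_coarsen hD'.2.2]
      rcases hcase x with ⟨h2, h3⟩ | ⟨i, hi⟩
      · rw [hold D hD _ h2 h3, hold D' hD' _ h2 h3]
      · rw [← hi]
        apply h
        apply hpm.lt_iff_lt.1
        rw [hi]
        exact (C.rep_le x).trans_lt hx
    intro i hi j hj
    rw [← rep_eq_iff, ← rep_eq_iff, h1 i hi, h1 j hj]
  obtain ⟨e, N, W, hN, hWN, hWle, hW⟩ := CSL.carlson_simpson L (fun w => ∃ D ∈ Cub k C C,
    w.map Subtype.val = (List.range w.length).map (fun i => D.rep (p i)) ∧ col (p w.length) D)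
  -- the homogeneous partition
  let idx : ℕ → ℕ := Nat.count (fun m => k < m ∧ C.Mn m)
  have hidx : ∀ i, idx (p i) = i := fun i => Nat.count_nth_of_infinite hinf i
  let val : L ⊕ ℕ → ℕ := Sum.elim Subtype.val (fun j => p (N j))
  let h : ℕ → ℕ := fun x => if C.rep x ≤ k then C.rep x else val (W (idx (C.rep x)))
  have h1 : ∀ x, C.rep x ≤ k → h x = C.rep x := fun x hx => if_pos hx
  have h2 : ∀ x i, p i = C.rep x → h x = val (W i) := by
    intro x i hi
    have : ¬ C.rep x ≤ k := by rw [← hi]; exact not_le.2 (hpk i)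
    simp only [h, if_neg this, ← hi, hidx]
  have hp : ∀ i, h (p i) = val (W i) := fun i => h2 _ _ (hpC i).rep_eq.symm
  have hpN : ∀ j, h (p (N j)) = p (N j) := by
    intro j; rw [hp, hWN]; rfl
  have hL : ∀ a : L, h a.1 = a.1 := by
    intro a
    have := a.2.2.rep_eq
    rw [h1 _ (by rw [this]; exact a.2.1), this]
  have hval : ∀ i, val (W i) ≤ p i := by
    intro i
    rcases hWi : W i with a | j
    · exact a.2.1.trans (hpk i).le
    · exact hpm.monotone (hWle i j hWi)
  have hle : ∀ x, h x ≤ x := by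
    intro x
    refine le_trans ?_ (C.rep_le x)
    rcases hcase x with ⟨h3, _⟩ | ⟨i, hi⟩
    · rw [h1 x h3]
    · rw [h2 x i hi, ← hi]; exact hval i
  have hidem : ∀ x, h (h x) = h x := by
    intro x
    rcases hcase x with ⟨h3, h4⟩ | ⟨i, hi⟩
    · rw [h1 x h3]; exact hL ⟨_, h3, h4⟩
    · rw [h2 x i hi]
      rcases hWi : W i with a | j
      · exact hL a
      · exact hpN j
  let B : Einf := mkKer h hle (fun M => ⟨p (N (M+1)), by
    have a1 := hN.id_le (M+1)
    have a2 := hpm.id_le (N (M+1))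
    simp only [id] at a1 a2
    omega, hpN _⟩)
  have hBrel : ∀ x, B.1 x (h x) := fun x => mkKer_rel.2 (hidem x).symm
  have hB : B ∈ Cub k C C := by
    refine ⟨mkKer_mn (hL ⟨k, le_rfl, hC⟩), ?_, ?_⟩
    · intro i hi j hj
      rw [mkKer_rel, h1 _ ((C.rep_le i).trans hi.le), h1 _ ((C.rep_le j).trans hj.le), rep_eq_iff]
    · intro i j hij
      rw [mkKer_rel]
      simp only [h, rep_eq_iff.2 hij]
  refine ⟨B, hB, ?_⟩
  have main : ∀ D ∈ Cub k B B, (col (D.nx k) D ↔ e) := by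
    intro D hDB
    have hD : D ∈ Cub k C C := cub_sub hB hDB
    have hm := D.mn_nx k
    have hkm := D.lt_nx k
    obtain ⟨i, hi⟩ := hpsurj _ hkm (hm.of_coarsen hD.2.2)
    obtain ⟨j, rfl⟩ : ∃ j, i = N j := by
      have hle2 : p i ≤ h (p i) := by
        rw [hi]
        exact hm _ (hDB.2.2 _ _ (B.1.symm (hBrel _)))
      rw [hp] at hle2
      rcases hWi : W i with a | j
      · rw [hWi] at hle2
        exact absurd (hle2.trans a.2.1) (not_le.2 (hpk i))
      · rw [hWi] at hle2
        exact ⟨j, le_antisymm (hpm.le_iff_le.1 hle2) (hWle i j hWi)⟩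
    have hex : ∀ j' : ℕ, ∃ a : L, j' < j → a.1 = D.rep (p (N j')) := by
      intro j'
      by_cases hj : j' < j
      · refine ⟨⟨D.rep (p (N j')), ?_, (D.mn_rep _).of_coarsen hD.2.2⟩, fun _ => rfl⟩
        by_contra hlt
        have a1 := nx_le (not_le.1 hlt) (D.mn_rep _)
        have a2 := D.rep_le (p (N j'))
        have a3 := hpm (hN hj)
        omega
      · exact ⟨Classical.arbitrary L, fun h => absurd h hj⟩
    choose a ha using hex
    rw [← hW j a, ← hi]
    have hword : ∀ i < N j, (Sum.elim id a (W i) : L).1 = D.rep (p i) := by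
      intro i hi
      have h3 : D.rep (p i) = D.rep (val (W i)) := by
        rw [← hp, rep_eq_iff]; exact hDB.2.2 _ _ (hBrel _)
      rw [h3]
      rcases hWi : W i with b | j'
      · exact (hold D hD _ b.2.1 b.2.2).symm
      · exact ha j' (hN.lt_iff_lt.1 ((hWle i j' hWi).trans_lt hi))
    have hmap : (List.map (fun i => Sum.elim id a (W i)) (List.range (N j))).map Subtype.val
        = (List.range (N j)).map (fun i => D.rep (p i)) := by
      rw [List.map_map]
      apply List.map_congr_left
      intro i hi
      exact hword i (List.mem_range.1 hi)
    simp only [List.length_map, List.length_range]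
    rw [hmap]
    constructor
    · intro hc
      exact ⟨D, hD, rfl, hc⟩
    · rintro ⟨D', hD', heq, hc⟩
      refine (hcol _ _ _ (hagree _ D hD D' hD' ?_)).2 hc
      intro i hi
      exact List.map_inj_left.1 heq i (List.mem_range.2 hi)
  by_cases he : e
  · exact Or.inl fun D hD => (main D hD).2 he
  · exact Or.inr fun D hD hc => he ((main D hD).1 hc)

/-- Ramsey property -/
def Ram (X : Set Einf) : Prop :=
  ∀ k (C : Einf), C.Mn k → ∃ B ∈ Cub k C C, Cub k B B ⊆ X ∨ Cub k B B ⊆ Xᶜ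

/-- (metrically) open sets -/
def Opn (O : Set Einf) : Prop :=
  ∀ C ∈ O, ∃ K, ∀ k ≥ K, ∀ D, Agr k D C → D ∈ O

theorem agr_nx {D D' : Einf} {k : ℕ} (h : Agr (D.nx k + 1) D D') : D'.nx k = D.nx k := by
  have h1 : D'.Mn (D.nx k) := (D.mn_nx k).of_agr h (Nat.lt_succ_self _)
  have h2 := nx_le (D.lt_nx k) h1
  have h3 : D.Mn (D'.nx k) := (D'.mn_nx k).of_agr h.symm (by omega)
  exact le_antisymm h2 (nx_le (D'.lt_nx k) h3)

theorem Opn.ram {O : Set Einf} (hO : Opn O) : Ram O := by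
  intro k C hC
  -- first fusion: decide everything
  obtain ⟨B₁, hB₁, hdec⟩ := fusion
    (fun k S => S ⊆ O ∨ ∀ B ∈ S, ¬ Cub k B B ⊆ O)
    (by
      rintro k S T hST (h | h)
      · exact Or.inl (hST.trans h)
      · exact Or.inr fun B hB => h B (hST hB))
    (by
      intro k C hC
      by_cases h : ∀ B ∈ Cub k C C, ¬ Cub k B B ⊆ O
      · exact ⟨C, self_mem_cub hC, Or.inr h⟩
      · push Not at h
        obtain ⟨B, hB, h⟩ := h
        exact ⟨B, hB, Or.inl h⟩) k C hC
  let col : ℕ → Einf → Prop := fun m D => Cub m D B₁ ⊆ O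
  have hcol : ∀ m D D', Agr m D D' → (col m D ↔ col m D') := by
    intro m D D' h
    simp only [col, cub_congr h]
  obtain ⟨B₂, hB₂, hhom⟩ := fusion
    (fun k S => (∀ D ∈ S, col (D.nx k) D) ∨ (∀ D ∈ S, ¬ col (D.nx k) D))
    (by
      rintro k S T hST (h | h)
      · exact Or.inl fun D hD => h D (hST hD)
      · exact Or.inr fun D hD => h D (hST hD))
    (fun k C hC => pigeon col hcol k C hC) k B₁ hB₁.1
  refine ⟨B₂, cub_sub hB₁ hB₂, ?_⟩
  by_cases hacc : Cub k B₂ B₁ ⊆ O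
  · left
    exact (cub_mono hB₂.2.2).trans hacc
  right
  intro D hD hDO
  have hDB₁ : Coarsen D B₁ := hD.2.2.trans hB₂.2.2
  -- all approximations of D are rejected
  have hrej : ∀ m, k ≤ m → D.Mn m → ¬ Cub m D B₁ ⊆ O := by
    intro m
    induction m using Nat.strong_induction_on with
    | _ m ih =>
      intro hkm hDm
      rcases hkm.eq_or_lt with rfl | hlt
      · rwa [cub_congr hD.2.1]
      · -- previous minimum
        obtain ⟨l, hl1, hl2, hl3⟩ : ∃ l, k ≤ l ∧ D.Mn l ∧ D.nx l = m := by
          have hne : k ∈ (Finset.range m).filter (fun l => D.Mn l) := by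
            simp [hlt, hD.1]
          obtain ⟨l, hl, hmax⟩ := Finset.exists_max_image
            ((Finset.range m).filter (fun l => D.Mn l)) id ⟨k, hne⟩
          simp only [Finset.mem_filter, Finset.mem_range, id] at hl hmax
          refine ⟨l, hmax k ⟨hlt, hD.1⟩, hl.2, le_antisymm (nx_le hl.1 hDm) ?_⟩
          by_contra hh
          have := hmax (D.nx l) ⟨not_le.1 hh, D.mn_nx l⟩
          have := D.lt_nx l
          omega
        have hlm : l < m := by rw [← hl3]; exact D.lt_nx l
        have hrl := ih l hlm hl1 hl2
        have hmem : D ∈ Cub l D B₂ := ⟨hl2, Agr.rfl', hD.2.2⟩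
        rcases hhom l hl1 D hD.2.2 hl2 with hh | hh
        · exfalso
          rcases hdec l hl1 D hDB₁ hl2 with h' | h'
          · exact hrl h'
          · apply h' D ⟨hl2, Agr.rfl', hDB₁⟩
            intro F hF
            have h1 := hh F (cub_mono hD.2.2 hF)
            exact h1 ⟨F.mn_nx l, Agr.rfl', hF.2.2.trans hDB₁⟩
        · have := hh D hmem
          rwa [hl3] at this
  obtain ⟨K, hK⟩ := hO D hDO
  obtain ⟨m, hm, hDm⟩ := D.exists_mn_gt (max K k)
  exact hrej m (by omega) hDm fun F hF => hK m (by omega) F hF.2.1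

theorem Ram.compl {X : Set Einf} (h : Ram X) : Ram Xᶜ := by
  intro k C hC
  obtain ⟨B, hB, h | h⟩ := h k C hC
  · exact ⟨B, hB, Or.inr (by rwa [compl_compl])⟩
  · exact ⟨B, hB, Or.inl h⟩

theorem Ram.seq {X : ℕ → Set Einf} (h : ∀ n, Ram (X n)) (n k : ℕ) (C : Einf) (hC : C.Mn k) :
    ∃ B ∈ Cub k C C, ∀ j ≤ n, Cub k B B ⊆ X j ∨ Cub k B B ⊆ (X j)ᶜ := by
  induction n with
  | zero =>
    obtain ⟨B, hB, h⟩ := h 0 k C hC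
    refine ⟨B, hB, fun j hj => ?_⟩
    obtain rfl : j = 0 := by omega
    exact h
  | succ n ih =>
    obtain ⟨B, hB, ih⟩ := ih
    obtain ⟨B', hB', h'⟩ := h (n+1) k B hB.1
    refine ⟨B', cub_sub hB hB', fun j hj => ?_⟩
    rcases Nat.lt_or_ge n j with hlt | hle
    · obtain rfl : j = n + 1 := by omega
      exact h'
    · exact (ih j hle).imp ((cub_sub hB').trans) ((cub_sub hB').trans)

theorem Ram.iUnion {X : ℕ → Set Einf} (h : ∀ n, Ram (X n)) : Ram (⋃ n, X n) := by
  intro k C hC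
  obtain ⟨B, hB, hdec⟩ := fusion (fun k S => ∀ j ≤ k, S ⊆ X j ∨ S ⊆ (X j)ᶜ)
    (fun k S T hST hT j hj => (hT j hj).imp hST.trans hST.trans)
    (fun k C hC => Ram.seq h k k C hC) k C hC
  let O : Set Einf := {D | ∃ m, D.Mn m ∧ Cub m D B ⊆ ⋃ n, X n}
  have hO : Opn O := by
    rintro D ⟨m, hm, hmO⟩
    refine ⟨m + 1, fun l hl D' hD' => ⟨m, hm.of_agr hD'.symm (by omega), ?_⟩⟩
    rwa [cub_congr (hD'.mono (by omega))]
  obtain ⟨B', hB', hh⟩ := hO.ram k B hB.1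
  refine ⟨B', cub_sub hB hB', ?_⟩
  rcases hh with hh | hh
  · left
    intro D hD
    obtain ⟨m, hm, hmO⟩ := hh hD
    exact hmO ⟨hm, Agr.rfl', hD.2.2.trans hB'.2.2⟩
  · right
    intro D hD hDX
    apply hh hD
    obtain ⟨j, hj⟩ := Set.mem_iUnion.1 hDX
    obtain ⟨m, hm, hDm⟩ := D.exists_mn_gt (max k j)
    have hDB : Coarsen D B := hD.2.2.trans hB'.2.2
    have hmem : D ∈ Cub m D B := ⟨hDm, Agr.rfl', hDB⟩
    refine ⟨m, hDm, ?_⟩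
    rcases hdec m (by omega) D hDB hDm j (by omega) with h1 | h1
    · exact h1.trans (Set.subset_iUnion X j)
    · exact absurd hj (h1 hmem)

theorem ram_empty : Ram ∅ := by
  intro k C hC
  exact ⟨C, self_mem_cub hC, Or.inr (by simp)⟩

theorem mu_mn (A : Einf) (n : ℕ) : A.Mn (A.mu n) := Nat.nth_mem_of_infinite A.infinite_mn n

theorem exists_mu_eq {A : Einf} {k : ℕ} (h : A.Mn k) : ∃ n, A.mu n = k :=
  ⟨Nat.count A.Mn k, Nat.nth_count h⟩

theorem le_mu (A : Einf) (n : ℕ) : n ≤ A.mu n := (Nat.nth_strictMono A.infinite_mn).id_le n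

theorem mu_agr {A D : Einf} {k n : ℕ} (h : Agr k D A) (hn : A.mu n < k) : D.mu n = A.mu n := by
  have h1 : D.Mn (A.mu n) := (A.mu_mn n).of_agr h.symm hn
  have h2 : Nat.count D.Mn (A.mu n) = Nat.count A.Mn (A.mu n) := by
    rw [Nat.count_eq_card_filter_range, Nat.count_eq_card_filter_range]
    congr 1
    apply Finset.filter_congr
    intro x hx
    have hx := Finset.mem_range.1 hx
    exact ⟨fun hh => hh.of_agr h (hx.trans hn), fun hh => hh.of_agr h.symm (hx.trans hn)⟩
  have h3 : Nat.count A.Mn (A.mu n) = n := Nat.count_nth_of_infinite A.infinite_mn n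
  have h4 : Nat.nth D.Mn (Nat.count D.Mn (A.mu n)) = A.mu n := Nat.nth_count h1
  rw [h2, h3] at h4
  exact h4

/-- The σ-algebra of Ramsey sets. -/
@[reducible] def ramSpace : MeasurableSpace Einf where
  MeasurableSet' := Ram
  measurableSet_empty := ram_empty
  measurableSet_compl _ h := h.compl
  measurableSet_iUnion _ h := Ram.iUnion h

theorem measurable_coord {α : Type} [MeasurableSpace α] (g : α → ℕ → ℕ → Bool)
    (h : ∀ n m, MeasurableSet ((fun x => g x n m) ⁻¹' {true})) : Measurable g :=
  measurable_pi_iff.2 fun n => measurable_pi_iff.2 fun m => measurable_to_bool (h n m)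

theorem ram_of_measurable {X : Set Einf} (hX : MeasurableSet X) : Ram X := by
  have hle : (inferInstance : MeasurableSpace Einf) ≤ ramSpace := by
    refine measurable_iff_comap_le.1 (?_ : @Measurable _ _ ramSpace _ toCS)
    refine @measurable_coord Einf ramSpace toCS fun n m => ?_
    refine Opn.ram (O := _) ?_
    intro A hA
    refine ⟨max m (A.mu n) + 1, fun k hk D hD => ?_⟩
    have h1 : A.1 m (A.mu n) := by simpa [toCS] using hA
    have h2 : D.mu n = A.mu n := mu_agr hD (by omega)
    have h3 : D.1 m (D.mu n) := by
      rw [h2]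
      exact (hD m (by omega) _ (by omega)).2 h1
    simpa [toCS] using h3
  exact hle X hX

theorem measurable_rel (i j : ℕ) : MeasurableSet {A : Einf | A.1 i j} := by
  have h : {A : Einf | A.1 i j} = ⋃ n, ({A | toCS A n i = true} ∩ {A | toCS A n j = true}) := by
    ext A
    simp only [Set.mem_ofPred_eq, Set.mem_iUnion, Set.mem_inter_iff, toCS, decide_eq_true_eq]
    constructor
    · intro h
      obtain ⟨n, hn⟩ := exists_mu_eq (A.mn_rep j)
      refine ⟨n, ?_, ?_⟩ <;> rw [hn]
      · exact A.1.trans h (A.1.symm (A.rel_rep j))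
      · exact A.1.symm (A.rel_rep j)
    · rintro ⟨n, h1, h2⟩
      exact A.1.trans h1 (A.1.symm h2)
  rw [h]
  have hm : Measurable toCS := comap_measurable _
  have hm2 : ∀ n m, Measurable (fun A : Einf => toCS A n m) := fun n m =>
    (measurable_pi_apply m).comp ((measurable_pi_apply n).comp hm)
  exact MeasurableSet.iUnion fun n =>
    ((hm2 n i) (measurableSet_singleton true)).inter ((hm2 n j) (measurableSet_singleton true))

end Einf

/-- The trace `tr(A, B, n)` of `A` in `B` at `n`: the restriction of the equivalence
relation `A` to the finite set `{0, 1, …, μ_n(B) − 1}`. -/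
noncomputable def Einf.trace (A B : Einf) (n : ℕ) : Setoid (Fin (B.mu n)) :=
  Setoid.comap (fun i => (i : ℕ)) A.1

/-- Lemma 5.2 (Traciality): every Borel map `f : 𝓔_∞ → 𝓔_∞` is tracial on some Ramsey
conull set `𝓒`: for every `B ∈ 𝓒` there is `n₀` so that for all `n ≥ n₀` and all
`A, A' ≤ B` admitting `k` and `s ∈ 𝓔_∞^fin` with `s = r_k(A) = r_k(A')` and
`dom(s) = {0,…,μ_n(B)−1}`, the traces `tr(f(A), B, n)` and `tr(f(A'), B, n)` agree. -/
theorem borel_maps_tracial_on_ramsey_conull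
    (f : Einf → Einf) (hf : Measurable f) :
    ∃ C : Set Einf, RamseyConull C ∧
      ∀ B ∈ C, ∃ n₀ : ℕ, ∀ n ≥ n₀, ∀ A A' : Einf,
        Coarsen A B → Coarsen A' B →
        (∃ k : ℕ, A.mu k = B.mu n ∧ rn A k = rn A' k) →
        Einf.trace (f A) B n = Einf.trace (f A') B n := by
  classical
  -- the property of being tracial from `k` on
  have key : ∀ k (C : Einf), C.Mn k → ∃ B ∈ Cub k C C, ∀ m ≥ k, ∀ A, Coarsen A B → A.Mn m →
      ∀ D ∈ Cub m A B, ∀ D' ∈ Cub m A B, ∀ i < m, ∀ j < m, ((f D).1 i j ↔ (f D').1 i j) := by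
    refine fusion (fun m S => ∀ D ∈ S, ∀ D' ∈ S, ∀ i < m, ∀ j < m, ((f D).1 i j ↔ (f D').1 i j))
      (fun m S T hST hT D hD D' hD' => hT D (hST hD) D' (hST hD')) ?_
    intro k C hC
    let X : ℕ → Set Einf := fun n => {A | (f A).1 n.unpair.1 n.unpair.2}
    have hX : ∀ n, Ram (X n) := fun n => ram_of_measurable (hf (measurable_rel _ _))
    obtain ⟨B, hB, h⟩ := Ram.seq hX (Nat.pair k k) k C hC
    refine ⟨B, hB, ?_⟩
    intro D hD D' hD' i hi j hj
    have hle : Nat.pair i j ≤ Nat.pair k k :=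
      ((Nat.pair_lt_pair_left j hi).trans (Nat.pair_lt_pair_right k hj)).le
    have hXm : ∀ E : Einf, E ∈ X (Nat.pair i j) ↔ (f E).1 i j := by
      intro E
      simp [X]
    rw [← hXm, ← hXm]
    rcases h _ hle with h | h
    · exact ⟨fun _ => h hD', fun _ => h hD⟩
    · exact ⟨fun h1 => absurd h1 (h hD), fun h1 => absurd h1 (h hD')⟩
  refine ⟨{B | ∃ n₀ : ℕ, ∀ n ≥ n₀, ∀ A A' : Einf,
        Coarsen A B → Coarsen A' B →
        (∃ k : ℕ, A.mu k = B.mu n ∧ rn A k = rn A' k) →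
        Einf.trace (f A) B n = Einf.trace (f A') B n}, ?_, fun B hB => hB⟩
  intro s A hne
  obtain ⟨C, ⟨n, hn⟩, hCA⟩ := hne
  obtain ⟨B, hB, hhom⟩ := key (C.mu n) C (C.mu_mn n)
  have hmk : ∀ (A A' : Einf) (n n' : ℕ), rn A n = rn A' n' ↔
      A.mu n = A'.mu n' ∧ Agr (A.mu n) A A' := by
    intro A A' n n'
    unfold rn
    generalize A.mu n = a
    generalize A'.mu n' = b
    constructor
    · intro h
      obtain rfl : a = b := congrArg Sigma.fst h
      refine ⟨rfl, fun i hi j hj => ?_⟩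
      have h2 := eq_of_heq (Sigma.mk.inj h).2
      exact iff_of_eq (congrArg (fun s : Setoid (Fin a) => s ⟨i, hi⟩ ⟨j, hj⟩) h2)
    · rintro ⟨rfl, h⟩
      congr 1
      ext i j
      exact h i i.2 j j.2
  refine ⟨B, ⟨?_, hB.2.2.trans hCA⟩, ?_⟩
  · obtain ⟨n', hn'⟩ := exists_mu_eq hB.1
    refine ⟨n', ?_⟩
    rw [← hn, hmk, hn']
    exact ⟨rfl, hB.2.1⟩
  · rw [Set.eq_empty_iff_forall_notMem]
    rintro E ⟨⟨_, hEB⟩, hE⟩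
    apply hE
    refine ⟨C.mu n, ?_⟩
    rintro l hl D D' hD hD' ⟨k, hk1, hk2⟩
    rw [hmk] at hk2
    have hDm : D.Mn (E.mu l) := hk1 ▸ D.mu_mn k
    have hDm' : D'.Mn (E.mu l) := hk1 ▸ hk2.1 ▸ D'.mu_mn k
    have hag : Agr (E.mu l) D' D := hk1 ▸ hk2.2.symm
    have h := hhom (E.mu l) (hl.trans (E.le_mu l)) D (hD.trans hEB) hDm
      D ⟨hDm, Agr.rfl', hD.trans hEB⟩ D' ⟨hDm', hag, hD'.trans hEB⟩
    ext i j
    exact h i i.2 j j.2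
end

section
/- Let f : 𝓔_∞ → 𝓔_∞ be a Borel map. Then there exists a Ramsey conull set 𝓓 ⊆ 𝓔_∞ such that for all B ∈ 𝓓 and all A ∈ 𝓔_∞ with A ≤ B, if f(A) ≤ B then f(A) ≤ A. -/
open Classical

open Einf

/-! ### Rigid surjections -/

namespace DR

/-- Rigid surjections: every value `y` has a first occurrence preceded only by smaller values. -/
def Rig (σ : ℕ → ℕ) : Prop := ∀ y, ∃ n, σ n = y ∧ ∀ i < n, σ i < y

/-- Rigid surjections fixing everything below `k`. -/
def MK (k : ℕ) (σ : ℕ → ℕ) : Prop := Rig σ ∧ ∀ i < k, σ i = i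

/-- Rigid surjections of finite type: a shift from `d` on. -/
def FT (d : ℕ) (ρ : ℕ → ℕ) : Prop :=
  Rig ρ ∧ (∀ i < d, ρ i < ρ d) ∧ ∀ i, ρ (d + i) = ρ d + i

lemma Rig.comp {σ τ : ℕ → ℕ} (hs : Rig σ) (ht : Rig τ) : Rig (σ ∘ τ) := by
  intro y
  obtain ⟨n, h1, h2⟩ := hs y
  obtain ⟨p, h3, h4⟩ := ht n
  exact ⟨p, by simp [h3, h1], fun i hi => h2 _ (h4 i hi)⟩

lemma Rig.id : Rig (fun x => x) := fun y => ⟨y, rfl, fun _ h => h⟩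

lemma Rig.le_first {σ : ℕ → ℕ} (hs : Rig σ) (y : ℕ) :
    ∀ n, σ n = y → (∀ i < n, σ i < y) → y ≤ n := by
  induction y with
  | zero => intros; omega
  | succ y ih =>
    intro n h1 h2
    obtain ⟨n', h3, h4⟩ := hs y
    have := ih n' h3 h4
    have : n' < n := by
      by_contra hh
      rcases (not_lt.mp hh).lt_or_eq with h | h
      · have := h4 n h; omega
      · subst h; omega
    omega

lemma Rig.le {σ : ℕ → ℕ} (hs : Rig σ) (n : ℕ) : σ n ≤ n := by
  obtain ⟨p, h1, h2⟩ := hs (σ n)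
  have h3 := hs.le_first _ p h1 h2
  by_contra hh
  have := h2 n (by omega)
  omega

lemma Rig.exists_lt {σ : ℕ → ℕ} (hs : Rig σ) {n y : ℕ} (h : y < σ n) : ∃ j < n, σ j = y := by
  obtain ⟨p, h1, h2⟩ := hs y
  refine ⟨p, ?_, h1⟩
  by_contra hh
  rcases (not_lt.mp hh).lt_or_eq with h' | h'
  · have := h2 n h'; omega
  · subst h'; omega

lemma MK.id (k : ℕ) : MK k (fun x => x) := ⟨Rig.id, fun _ _ => rfl⟩

lemma MK.comp {k : ℕ} {σ τ : ℕ → ℕ} (hs : MK k σ) (ht : MK k τ) : MK k (σ ∘ τ) :=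
  ⟨hs.1.comp ht.1, fun i hi => by simp [ht.2 i hi, hs.2 i hi]⟩

lemma MK.mono {k l : ℕ} {σ : ℕ → ℕ} (hs : MK l σ) (h : k ≤ l) : MK k σ :=
  ⟨hs.1, fun i hi => hs.2 i (by omega)⟩

lemma FT.id (d : ℕ) : FT d (fun x => x) := ⟨Rig.id, fun _ h => h, fun _ => rfl⟩

lemma FT.ge {d : ℕ} {ρ : ℕ → ℕ} (h : FT d ρ) {x : ℕ} (hx : d ≤ x) : ρ x = ρ d + (x - d) := by
  have := h.2.2 (x - d)
  rwa [Nat.add_sub_cancel' hx] at this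

lemma lift {d : ℕ} {ρ τ' : ℕ → ℕ} (hρ : FT d ρ) (ht : MK (ρ d) τ') :
    ∃ τ, MK d τ ∧ ρ ∘ τ = τ' ∘ ρ := by
  have hpre : ∀ y, ∃ j, y < ρ d → j < d ∧ ρ j = y := by
    intro y
    by_cases h : y < ρ d
    · obtain ⟨j, h1, h2⟩ := hρ.1.exists_lt h
      exact ⟨j, fun _ => ⟨h1, h2⟩⟩
    · exact ⟨0, fun h' => absurd h' h⟩
  choose g hg using hpre
  set τ : ℕ → ℕ := fun x => if x < d then x else
    if τ' (ρ x) < ρ d then g (τ' (ρ x)) else d + (τ' (ρ x) - ρ d) with hτ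
  refine ⟨τ, ⟨?_, ?_⟩, ?_⟩
  · intro y
    by_cases hy : y < d
    · refine ⟨y, by simp [hτ, hy], fun i hi => ?_⟩
      have : i < d := by omega
      simpa [hτ, this] using hi
    · obtain ⟨n', h1, h2⟩ := ht.1 (ρ d + (y - d))
      have h3 : ρ d ≤ n' := by
        by_contra hh
        have := ht.2 n' (by omega)
        omega
      have e1 : ρ (d + (n' - ρ d)) = n' := by rw [hρ.2.2]; omega
      refine ⟨d + (n' - ρ d), ?_, ?_⟩
      · simp only [hτ, e1, h1]
        rw [if_neg (by omega), if_neg (by omega)]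
        omega
      · intro i hi
        by_cases hid : i < d
        · simp only [hτ, if_pos hid]; omega
        · have e2 := hρ.ge (not_lt.mp hid)
          have := h2 (ρ i) (by omega)
          simp only [hτ, if_neg hid]
          split_ifs with h5
          · have := (hg _ h5).1; omega
          · omega
  · intro i hi
    simp [hτ, hi]
  · funext x
    by_cases hx : x < d
    · have := hρ.2.1 x hx
      simp [hτ, hx, ht.2 _ this]
    · simp only [hτ, Function.comp, if_neg hx]
      split_ifs with h5
      · exact (hg _ h5).2
      · rw [hρ.2.2]; omega

lemma push {d : ℕ} {ρ σ : ℕ → ℕ} (hρ : FT d ρ) (hs : MK d σ) :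
    ∃ σ', MK (ρ d) σ' ∧ ρ ∘ σ = σ' ∘ ρ := by
  set σ' : ℕ → ℕ := fun x => if x < ρ d then x else ρ (σ (d + (x - ρ d))) with hσ
  refine ⟨σ', ⟨?_, ?_⟩, ?_⟩
  · intro y
    by_cases hy : y < ρ d
    · refine ⟨y, by simp [hσ, hy], fun i hi => ?_⟩
      have : i < ρ d := by omega
      simpa [hσ, this] using hi
    · obtain ⟨n, h1, h2⟩ := hs.1 (d + (y - ρ d))
      have h3 : d ≤ n := by
        by_contra hh
        have := hs.2 n (by omega)
        omega
      refine ⟨ρ d + (n - d), ?_, ?_⟩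
      · simp only [hσ]
        rw [if_neg (by omega), show d + (ρ d + (n - d) - ρ d) = n by omega, h1, hρ.2.2]
        omega
      · intro i hi
        by_cases hid : i < ρ d
        · simp only [hσ, if_pos hid]; omega
        · have := h2 (d + (i - ρ d)) (by omega)
          simp only [hσ, if_neg hid]
          by_cases h6 : σ (d + (i - ρ d)) < d
          · have := hρ.2.1 _ h6; omega
          · rw [hρ.ge (not_lt.mp h6)]; omega
  · intro i hi
    simp [hσ, hi]
  · funext x
    by_cases hx : x < d
    · simp [hσ, hs.2 x hx, hρ.2.1 x hx]
    · have := hρ.ge (not_lt.mp hx)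
      simp only [hσ, Function.comp]
      rw [if_neg (by omega), this]
      congr 2; omega

lemma cut {σ : ℕ → ℕ} (hs : Rig σ) (d : ℕ) :
    ∃ ρ s, FT d ρ ∧ MK (ρ d) s ∧ σ = s ∘ ρ ∧ ∀ i < d, ρ i = σ i := by
  obtain ⟨m, hm1, hm2⟩ : ∃ m, (∀ i < d, σ i < m) ∧ ∀ y < m, ∃ i < d, y ≤ σ i := by
    refine ⟨(Finset.range d).sup (fun i => σ i + 1), ?_, ?_⟩
    · intro i hi
      have := Finset.le_sup (f := fun i => σ i + 1) (Finset.mem_range.mpr hi)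
      simpa using this
    · intro y hy
      rw [Finset.lt_sup_iff] at hy
      obtain ⟨i, h1, h2⟩ := hy
      exact ⟨i, Finset.mem_range.mp h1, by omega⟩
  set ρ : ℕ → ℕ := fun x => if x < d then σ x else m + (x - d) with hρ
  set s : ℕ → ℕ := fun y => if y < m then y else σ (d + (y - m)) with hs'
  have hd : ρ d = m := by simp [hρ]
  have hlt : ∀ i < d, ρ i = σ i := fun i hi => by simp [hρ, hi]
  have hge : ∀ i, ρ (d + i) = m + i := fun i => by simp [hρ]
  refine ⟨ρ, s, ⟨?_, ?_, ?_⟩, ⟨?_, ?_⟩, ?_, hlt⟩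
  · intro y
    by_cases hy : y < m
    · obtain ⟨n, h1, h2⟩ := hs y
      have : n < d := by
        obtain ⟨i, h3, h4⟩ := hm2 y hy
        by_contra hh
        have := h2 i (by omega)
        omega
      refine ⟨n, by rw [hlt n this, h1], fun i hi => ?_⟩
      rw [hlt i (by omega)]; exact h2 i hi
    · refine ⟨d + (y - m), by rw [hge]; omega, fun i hi => ?_⟩
      by_cases hid : i < d
      · rw [hlt i hid]; have := hm1 i hid; omega
      · have := hge (i - d)
        rw [show d + (i - d) = i by omega] at this
        omega
  · intro i hi; rw [hd, hlt i hi]; exact hm1 i hi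
  · intro i; rw [hd, hge]
  · intro y
    by_cases hy : y < m
    · refine ⟨y, by simp [hs', hy], fun i hi => ?_⟩
      have : i < m := by omega
      simpa [hs', this] using hi
    · obtain ⟨n, h1, h2⟩ := hs y
      have : d ≤ n := by
        by_contra hh
        have := hm1 n (by omega)
        omega
      refine ⟨m + (n - d), ?_, ?_⟩
      · simp only [hs']
        rw [if_neg (by omega), show d + (m + (n - d) - m) = n by omega, h1]
      · intro i hi
        by_cases hid : i < m
        · simp only [hs', if_pos hid]; omega
        · simp only [hs', if_neg hid]
          exact h2 _ (by omega)
  · intro i hi; rw [hd] at hi; simp [hs', hi]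
  · funext x
    by_cases hx : x < d
    · simp [hlt x hx, hs', hm1 x hx]
    · have := hge (x - d)
      rw [show d + (x - d) = x by omega] at this
      simp only [Function.comp, this, hs']
      rw [if_neg (by omega)]; congr 1; omega

lemma FT.ext {d : ℕ} {ρ ρ' : ℕ → ℕ} (h : FT d ρ) (h' : FT d ρ') (he : ∀ i < d, ρ i = ρ' i) :
    ρ = ρ' := by
  have key : ρ d = ρ' d := by
    rcases lt_trichotomy (ρ d) (ρ' d) with hh | hh | hh
    · obtain ⟨j, h1, h2⟩ := h'.1.exists_lt hh
      have := h.2.1 j h1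
      have := he j h1
      omega
    · exact hh
    · obtain ⟨j, h1, h2⟩ := h.1.exists_lt hh
      have := h'.2.1 j h1
      have := he j h1
      omega
  funext x
  by_cases hx : x < d
  · exact he x hx
  · rw [h.ge (not_lt.mp hx), h'.ge (not_lt.mp hx), key]

lemma FT.finite (d : ℕ) : {ρ | FT d ρ}.Finite := by
  apply Set.Finite.of_injOn (f := fun ρ => fun i : Fin d => (⟨min (ρ i) d, by omega⟩ : Fin (d + 1)))
    (t := Set.univ) (fun _ _ => Set.mem_univ _) _ Set.finite_univ
  intro ρ h ρ' h' he
  apply FT.ext h h'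
  intro i hi
  have := congrFun he ⟨i, hi⟩
  simp only [Fin.mk.injEq] at this
  have h1 := h.1.le i
  have h2 := h'.1.le i
  omega

/-- Fusion. -/
lemma fusion (k : ℕ) (Q : ℕ → (ℕ → ℕ) → Prop)
    (hd : ∀ d T, k ≤ d → MK k T → ∃ τ, MK d τ ∧ Q d (τ ∘ T))
    (hh : ∀ d T σ, k ≤ d → MK k T → MK d σ → Q d T → Q d (σ ∘ T)) :
    ∃ T, MK k T ∧ ∀ d, k ≤ d → Q d T := by
  choose! g hg using hd
  let T : ℕ → (ℕ → ℕ) := fun n => Nat.rec (fun x => x) (fun n T => g (k + n) T ∘ T) n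
  have hT1 : ∀ n, T (n + 1) = g (k + n) (T n) ∘ T n := fun n => rfl
  have hT : ∀ n, MK k (T n) := by
    intro n
    induction n with
    | zero => exact MK.id k
    | succ n ih =>
      rw [hT1]
      exact ((hg (k + n) (T n) (by omega) ih).1.mono (by omega)).comp ih
  obtain ⟨t, ht⟩ : ∃ t : ℕ → ℕ → ℕ, ∀ n, t n = g (k + n) (T n) := ⟨_, fun _ => rfl⟩
  have htM : ∀ n, MK (k + n) (t n) := fun n => by
    rw [ht]; exact (hg (k + n) (T n) (by omega) (hT n)).1
  have htQ : ∀ n, Q (k + n) (t n ∘ T n) := fun n => by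
    rw [ht]; exact (hg (k + n) (T n) (by omega) (hT n)).2
  simp only [← ht] at hT1
  let U : ℕ → ℕ → (ℕ → ℕ) := fun n j => Nat.rec (fun x => x) (fun j u => t (n + j) ∘ u) j
  have hU0 : ∀ n, U n 0 = fun x => x := fun n => rfl
  have hU1 : ∀ n j, U n (j + 1) = t (n + j) ∘ U n j := fun n j => rfl
  have hU2 : ∀ n j, U n (j + 1) = U (n + 1) j ∘ t n := by
    intro n j
    induction j with
    | zero => rfl
    | succ j ih =>
      rw [hU1, ih, hU1, show n + (j + 1) = n + 1 + j by omega]; rfl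
  have hUR : ∀ n j, Rig (U n j) := by
    intro n j
    induction j with
    | zero => exact Rig.id
    | succ j ih => rw [hU1]; exact (htM _).1.comp ih
  have hst : ∀ n j i, U n j i < k + n + j → ∀ l, U n (j + l) i = U n j i := by
    intro n j i h l
    induction l with
    | zero => rfl
    | succ l ih =>
      rw [← add_assoc, hU1, Function.comp, ih]
      exact (htM _).2 _ (by omega)
  have hk : ∀ n i, U n i i < k + n + i ∨ k + n = 0 := by
    intro n i; have := (hUR n i).le i; omega
  obtain ⟨L, hL⟩ : ∃ L : ℕ → ℕ → ℕ, ∀ n i, L n i = U n (i + 1) i := ⟨_, fun _ _ => rfl⟩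
  have hL' : ∀ n j i, U n j i < k + n + j → L n i = U n j i := by
    intro n j i h
    rw [hL]
    have h1 := hst n j i h (i + 1)
    have h2 := hst n (i + 1) i (by have := (hUR n (i + 1)).le i; omega) j
    rw [← h2, add_comm, h1]
  have hLM : ∀ n, MK (k + n) (L n) := by
    intro n
    refine ⟨?_, ?_⟩
    · intro y
      obtain ⟨p, h1, h2⟩ := hUR n (y + 1) y
      refine ⟨p, ?_, ?_⟩
      · rw [hL' n (y + 1) p (by omega), h1]
      · intro i hi
        have := h2 i hi
        rw [hL' n (y + 1) i (by omega)]; exact this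
    · intro i hi
      rw [hL' n 0 i (by simpa [hU0] using hi), hU0]
  have hLs : ∀ n, L n = L (n + 1) ∘ t n := by
    intro n
    funext y
    have h1 := hL' n (y + 1 + 1) y (by have := (hUR n (y + 1 + 1)).le y; omega)
    have h2 := hL' (n + 1) (y + 1) (t n y) (by
      have := (hUR (n + 1) (y + 1)).le (t n y)
      have := (htM n).1.le y
      omega)
    rw [h1, hU2, Function.comp, Function.comp, h2]
  have hL0 : ∀ n, L 0 = L n ∘ T n := by
    intro n
    induction n with
    | zero => rfl
    | succ n ih => rw [ih, hLs n, hT1]; rfl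
  refine ⟨L 0, hLM 0, fun d hd => ?_⟩
  obtain ⟨n, rfl⟩ := Nat.exists_eq_add_of_le hd
  rw [hL0 (n + 1), hT1]
  apply hh _ _ _ hd _ ((hLM (n + 1)).mono (by omega)) (htQ n)
  rw [← hT1]; exact hT (n + 1)

/-- Simultaneously treating finitely many requirements. -/
lemma finConj {ι : Type*} (k d : ℕ) (hkd : k ≤ d) (I : Set ι) (hI : I.Finite)
    (Q : ι → (ℕ → ℕ) → Prop)
    (hd : ∀ i ∈ I, ∀ T, MK k T → ∃ τ, MK d τ ∧ Q i (τ ∘ T))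
    (hh : ∀ i ∈ I, ∀ T σ, MK k T → MK d σ → Q i T → Q i (σ ∘ T)) :
    ∀ T, MK k T → ∃ τ, MK d τ ∧ ∀ i ∈ I, Q i (τ ∘ T) := by
  induction I, hI using Set.Finite.induction_on with
  | empty => intro T _; exact ⟨_, MK.id d, by simp⟩
  | @insert a s ha hs ih =>
    intro T hT
    obtain ⟨τ, h1, h2⟩ := ih (fun i hi => hd i (Set.mem_insert_of_mem _ hi))
      (fun i hi => hh i (Set.mem_insert_of_mem _ hi)) T hT
    have hτT : MK k (τ ∘ T) := (h1.mono hkd).comp hT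
    obtain ⟨τ', h3, h4⟩ := hd a (Set.mem_insert _ _) (τ ∘ T) hτT
    refine ⟨τ' ∘ τ, h3.comp h1, ?_⟩
    intro i hi
    rcases Set.mem_insert_iff.mp hi with rfl | hi'
    · exact h4
    · exact hh i hi (τ ∘ T) τ' hτT h3 (h2 i hi')

/-! ### Carlson-Simpson pigeonhole via ultrafilters -/

section CS

open Filter

attribute [local instance] Ultrafilter.mul Ultrafilter.semigroup

lemma exists_min_left_ideal {M : Type*} [Nonempty M] [Semigroup M]
    [TopologicalSpace M] [CompactSpace M] [T2Space M]
    (hc : ∀ r : M, Continuous (· * r)) :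
    ∃ L : Set M, L.Nonempty ∧ (∀ x, ∀ l ∈ L, x * l ∈ L) ∧
      ∀ e ∈ L, ∀ f ∈ L, ∃ y, e = y * f := by
  let S : Set (Set M) := { N | IsClosed N ∧ N.Nonempty ∧ ∀ x, ∀ l ∈ N, x * l ∈ N }
  obtain ⟨N, hN⟩ : ∃ N', Minimal (· ∈ S) N' := by
    refine zorn_superset _ fun c hcs hc => ?_
    refine ⟨⋂₀ c, ⟨isClosed_sInter fun t ht => (hcs ht).1, ?_, fun x l hl => ?_⟩,
      fun s hs => Set.sInter_subset_of_mem hs⟩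
    · obtain rfl | hcnemp := c.eq_empty_or_nonempty
      · rw [Set.sInter_empty]
        apply Set.univ_nonempty
      convert
        @IsCompact.nonempty_iInter_of_directed_nonempty_isCompact_isClosed _ _ _ hcnemp.coe_sort
          ((↑) : c → Set M) ?_ ?_ ?_ ?_
      · exact Set.sInter_eq_iInter
      · refine DirectedOn.directed_val (IsChain.directedOn hc.symm)
      exacts [fun i => (hcs i.prop).2.1, fun i => (hcs i.prop).1.isCompact,
        fun i => (hcs i.prop).1]
    · rw [Set.mem_sInter] at hl ⊢
      exact fun t ht => (hcs ht).2.2 x l (hl t ht)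
  refine ⟨N, hN.prop.2.1, hN.prop.2.2, fun e he f hf => ?_⟩
  have hmem : Set.range (fun y => y * f) ∈ S := by
    refine ⟨(isCompact_range (hc f)).isClosed, Set.range_nonempty _, ?_⟩
    rintro x _ ⟨y, rfl⟩
    exact ⟨x * y, mul_assoc _ _ _⟩
  have hsub : Set.range (fun y => y * f) ⊆ N := by
    rintro _ ⟨y, rfl⟩
    exact hN.prop.2.2 y f hf
  have := hN.le_of_le hmem hsub he
  obtain ⟨y, hy⟩ := this
  exact ⟨y, hy.symm⟩

lemma map_mul' {M N : Type*} [Monoid M] [Monoid N] (θ : M →* N) (U V : Ultrafilter M) :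
    Ultrafilter.map θ (U * V) = Ultrafilter.map θ U * Ultrafilter.map θ V := by
  apply Ultrafilter.coe_inj.mp
  apply Filter.ext'
  intro p
  rw [Ultrafilter.eventually_mul]
  simp only [Ultrafilter.coe_map, Filter.eventually_map]
  rw [Ultrafilter.eventually_mul]
  simp

/-- substitution of a letter for the variable -/
def sub {α : Type*} (a : α) : FreeMonoid (Option α) →* FreeMonoid α :=
  FreeMonoid.map (fun o => o.getD a)

/-- the inclusion of constant words -/
def inc {α : Type*} : FreeMonoid α →* FreeMonoid (Option α) := FreeMonoid.map some

lemma sub_inc {α : Type*} (a : α) (w : FreeMonoid α) : sub a (inc w) = w := by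
  have : (sub a).comp inc = MonoidHom.id (FreeMonoid α) := by
    ext x
    simp [sub, inc]
  exact DFunLike.congr_fun this w

lemma exists_q (α : Type*) :
    ∃ q : Ultrafilter (FreeMonoid (Option α)),
      (∀ᶠ x : FreeMonoid (Option α) in (q : Filter (FreeMonoid (Option α))), ∃ t,
      x = FreeMonoid.of none * t) ∧
      ∀ a b : α, Ultrafilter.map (sub a) q * Ultrafilter.map (sub b) q
        = Ultrafilter.map (sub a) q := by
  obtain ⟨L, ⟨p, hp⟩, hL, hm⟩ := exists_min_left_ideal (M := Ultrafilter (FreeMonoid α))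
    Ultrafilter.continuous_mul_left
  let K : Set (Ultrafilter (FreeMonoid (Option α))) :=
    {X | {x | ∃ t, x = FreeMonoid.of none * t} ∈ X}
  have hK : IsClosed K := ultrafilter_isClosed_basic _
  have hKr : ∀ X ∈ K, ∀ Y, X * Y ∈ K := by
    intro X hX Y
    change ∀ᶠ x : FreeMonoid (Option α) in ((X * Y : Ultrafilter _) : Filter _), ∃ t,
      x = FreeMonoid.of none * t
    rw [Ultrafilter.eventually_mul]
    filter_upwards [hX] with x hx
    obtain ⟨t, rfl⟩ := hx
    exact Filter.Eventually.of_forall fun y => ⟨t * y, mul_assoc _ _ _⟩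
  have hKne : K.Nonempty := by
    refine ⟨pure (FreeMonoid.of none), ?_⟩
    change {x : FreeMonoid (Option α) | ∃ t, x = FreeMonoid.of none * t} ∈
      (pure (FreeMonoid.of none) : Ultrafilter (FreeMonoid (Option α)))
    rw [Ultrafilter.mem_pure]
    exact ⟨1, by simp⟩
  obtain ⟨q, ⟨X, hX, hXq⟩, hq⟩ := exists_idempotent_in_compact_subsemigroup
    (M := Ultrafilter (FreeMonoid (Option α))) Ultrafilter.continuous_mul_left
    ((fun X => X * Ultrafilter.map inc p) '' K) (hKne.image _)
    (hK.isCompact.image (Ultrafilter.continuous_mul_left _)) (by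
      rintro _ ⟨X, hX, rfl⟩ _ ⟨Y, hY, rfl⟩
      refine ⟨X * Ultrafilter.map inc p * Y, ?_, ?_⟩
      · exact hKr _ (hKr _ hX _) _
      · simp only [mul_assoc])
  have hmem : ∀ a, Ultrafilter.map (sub a) q ∈ L := by
    intro a
    rw [← hXq]
    simp only
    rw [map_mul', Ultrafilter.map_map]
    have : (⇑(sub a) ∘ ⇑(inc (α := α))) = id := by funext w; exact sub_inc a w
    rw [this, Ultrafilter.map_id]
    exact hL _ _ hp
  have hid : ∀ a, Ultrafilter.map (sub a) q * Ultrafilter.map (sub a) q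
      = Ultrafilter.map (sub a) q := fun a => by rw [← map_mul', hq]
  refine ⟨q, ?_, fun a b => ?_⟩
  · rw [← hXq]
    exact hKr _ hX _
  · obtain ⟨y, hy⟩ := hm _ (hmem a) _ (hmem b)
    rw [hy, mul_assoc, hid]

/-- the reduced words -/
def wd {α : Type*} (w0 : FreeMonoid α) (x : ℕ → FreeMonoid (Option α)) (a : ℕ → α) :
    ℕ → FreeMonoid α
  | 0 => w0
  | n + 1 => wd w0 x a n * sub (a n) (x n)

lemma cs_mono {α : Type*} [Finite α] (q : Ultrafilter (FreeMonoid (Option α)))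
    (hq1 : ∀ᶠ x : FreeMonoid (Option α) in (q : Filter (FreeMonoid (Option α))), ∃ t,
      x = FreeMonoid.of none * t)
    (hq2 : ∀ a b : α, Ultrafilter.map (sub a) q * Ultrafilter.map (sub b) q
        = Ultrafilter.map (sub a) q) (a0 : α)
    (P : FreeMonoid α → Prop) (hP : ∀ᶠ w in Ultrafilter.map (sub a0) q, P w) :
    ∃ w0 x, (∀ n, ∃ t, x n = FreeMonoid.of none * t) ∧ ∀ a n, P (wd w0 x a n) := by
  let Good : FreeMonoid α → Prop := fun w =>
    P w ∧ ∀ b, ∀ᶠ y in Ultrafilter.map (sub b) q, P (w * y)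
  have h0 : ∃ w, Good w := by
    have : ∀ b, ∀ᶠ w in Ultrafilter.map (sub a0) q,
        ∀ᶠ y in Ultrafilter.map (sub b) q, P (w * y) := by
      intro b
      rw [← Ultrafilter.eventually_mul, hq2]; exact hP
    exact (hP.and (eventually_all.mpr this)).exists
  have hstep : ∀ F : Set (FreeMonoid α), ∃ x, (F.Finite → (∀ w ∈ F, Good w) →
      (∃ t, x = FreeMonoid.of none * t) ∧ ∀ w ∈ F, ∀ a, Good (w * sub a x)) := by
    intro F
    by_cases hF : F.Finite ∧ ∀ w ∈ F, Good w
    swap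
    · exact ⟨1, fun h1 h2 => absurd ⟨h1, h2⟩ hF⟩
    have h1 : ∀ w ∈ F, ∀ a, ∀ᶠ x in q, Good (w * sub a x) := by
      intro w hw a
      have hA : ∀ᶠ x in Ultrafilter.map (sub a) q, P (w * x) := (hF.2 w hw).2 a
      have hB : ∀ b, ∀ᶠ x in Ultrafilter.map (sub a) q,
          ∀ᶠ y in Ultrafilter.map (sub b) q, P (w * x * y) := by
        intro b
        have := hA
        rw [← hq2 a b, Ultrafilter.eventually_mul] at this
        simpa only [mul_assoc] using this
      have := hA.and (eventually_all.mpr hB)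
      rw [Ultrafilter.coe_map, Filter.eventually_map] at this
      exact this
    have h2 : ∀ᶠ x in q, ∀ w ∈ F, ∀ a, Good (w * sub a x) := by
      rw [Filter.eventually_all_finite hF.1]
      intro w hw
      exact eventually_all.mpr (h1 w hw)
    obtain ⟨x, hx1, hx2⟩ := (hq1.and h2).exists
    exact ⟨x, fun _ _ => ⟨hx1, hx2⟩⟩
  choose g hg using hstep
  obtain ⟨w0, hw0⟩ := h0
  let F : ℕ → Set (FreeMonoid α) := fun n => Nat.rec {w0}
    (fun _ F => Set.image2 (fun w a => w * sub a (g F)) F Set.univ) n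
  have hF1 : ∀ n, F (n + 1) = Set.image2 (fun w a => w * sub a (g (F n))) (F n) Set.univ :=
    fun n => rfl
  have hF : ∀ n, (F n).Finite ∧ ∀ w ∈ F n, Good w := by
    intro n
    induction n with
    | zero => exact ⟨Set.finite_singleton _, fun w hw => by
      rw [Set.mem_singleton_iff.mp hw]; exact hw0⟩
    | succ n ih =>
      rw [hF1]
      refine ⟨ih.1.image2 _ Set.finite_univ, ?_⟩
      rintro _ ⟨w, hw, a, -, rfl⟩
      exact (hg (F n) ih.1 ih.2).2 w hw a
  have hwd : ∀ a n, wd w0 (fun n => g (F n)) a n ∈ F n := by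
    intro a n
    induction n with
    | zero => exact rfl
    | succ n ih => rw [hF1]; exact ⟨_, ih, a n, trivial, rfl⟩
  exact ⟨w0, fun n => g (F n), fun n => (hg _ (hF n).1 (hF n).2).1,
    fun a n => ((hF n).2 _ (hwd a n)).1⟩

lemma cs {α : Type*} [Finite α] [Nonempty α] (P : FreeMonoid α → Prop) :
    ∃ w0 x, (∀ n, ∃ t, x n = FreeMonoid.of none * t) ∧
      ((∀ a n, P (wd w0 x a n)) ∨ (∀ a n, ¬ P (wd w0 x a n))) := by
  obtain ⟨q, h1, h2⟩ := exists_q α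
  obtain ⟨a0⟩ := ‹Nonempty α›
  by_cases hP : ∀ᶠ w in Ultrafilter.map (sub a0) q, P w
  · obtain ⟨w0, x, h3, h4⟩ := cs_mono q h1 h2 a0 P hP
    exact ⟨w0, x, h3, Or.inl h4⟩
  · rw [← Ultrafilter.eventually_not] at hP
    obtain ⟨w0, x, h3, h4⟩ := cs_mono q h1 h2 a0 _ hP
    exact ⟨w0, x, h3, Or.inr h4⟩

end CS

/-- the code of a finite word as a list of natural numbers -/
def enc {m : ℕ} (u : FreeMonoid (Fin m)) : List ℕ :=
  List.range m ++ u.toList.map Fin.val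

/-- the prefixes of the infinite word -/
def pre {m : ℕ} (w0 : FreeMonoid (Fin m)) (x : ℕ → FreeMonoid (Option (Fin m))) : ℕ → List ℕ
  | 0 => enc w0
  | n + 1 => pre w0 x n ++ (x n).toList.map (fun o => o.elim (m + n) Fin.val)

lemma enc_lt {m : ℕ} (u : FreeMonoid (Fin m)) : ∀ y ∈ enc u, y < m := by
  intro y hy
  simp only [enc, List.mem_append, List.mem_range, List.mem_map] at hy
  rcases hy with h | ⟨a, _, rfl⟩
  · exact h
  · exact a.2

lemma getD_mem' {l : List ℕ} {i : ℕ} (h : i < l.length) : l.getD i 0 ∈ l := by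
  rw [List.getD_eq_getElem _ _ h]; exact List.getElem_mem h

lemma pigeonhole {m : ℕ} (hm : 1 ≤ m) (C : (ℕ → ℕ) → Prop)
    (hC : ∀ σ σ₂, MK m σ → MK m σ₂ → ∀ p, σ p = m → (∀ i < p, σ i < m) →
      (∀ i ≤ p, σ₂ i = σ i) → C σ → C σ₂) :
    ∃ τ, MK m τ ∧ ((∀ σ, MK m σ → C (σ ∘ τ)) ∨ (∀ σ, MK m σ → ¬ C (σ ∘ τ))) := by
  have : Nonempty (Fin m) := ⟨⟨0, by omega⟩⟩
  obtain ⟨w0, x, hx, hmono⟩ := cs (α := Fin m) (fun u => ∃ σ, MK m σ ∧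
    (∀ i < (enc u).length, σ i = (enc u).getD i 0) ∧ σ (enc u).length = m ∧ C σ)
  set pr := pre w0 x with hpr
  have hp0 : pr 0 = enc w0 := rfl
  have hp1 : ∀ n, ∃ t, pr (n + 1) = pr n ++ (m + n) :: t := by
    intro n
    obtain ⟨t, ht⟩ := hx n
    refine ⟨t.toList.map (fun o => o.elim (m + n) Fin.val), ?_⟩
    change pr n ++ _ = _
    rw [ht, FreeMonoid.toList_mul, FreeMonoid.toList_of]
    simp
  have hlen : ∀ n, n ≤ (pr n).length := by
    intro n
    induction n with
    | zero => omega
    | succ n ih => obtain ⟨t, ht⟩ := hp1 n; rw [ht]; simp; omega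
  have hget : ∀ n i, i < (pr n).length → ∀ l, i < (pr (n + l)).length ∧
      (pr (n + l)).getD i 0 = (pr n).getD i 0 := by
    intro n i hi l
    induction l with
    | zero => exact ⟨hi, rfl⟩
    | succ l ih =>
      obtain ⟨t, ht⟩ := hp1 (n + l)
      rw [← add_assoc, ht]
      refine ⟨by rw [List.length_append]; omega, ?_⟩
      rw [List.getD_append _ _ _ _ ih.1, ih.2]
  set τ : ℕ → ℕ := fun i => (pr (i + 1)).getD i 0 with hτdef
  have hτ : ∀ n i, i < (pr n).length → τ i = (pr n).getD i 0 := by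
    intro n i hi
    have h1 := (hget n i hi (i + 1)).2
    have h2 := (hget (i + 1) i (by have := hlen (i + 1); omega) n).2
    rw [hτdef]
    simp only
    rw [← h2, add_comm, h1]
  have hlast : ∀ n, τ (pr n).length = m + n := by
    intro n
    obtain ⟨t, ht⟩ := hp1 n
    rw [hτ (n + 1) _ (by rw [ht]; simp), ht, List.getD_append_right _ _ _ _ le_rfl]
    simp
  have hbd : ∀ n, ∀ y ∈ pr n, y < m + n := by
    intro n
    induction n with
    | zero => exact enc_lt w0
    | succ n ih =>
      intro y hy
      change y ∈ pr n ++ (x n).toList.map (fun o => o.elim (m + n) Fin.val) at hy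
      rw [List.mem_append, List.mem_map] at hy
      rcases hy with h | ⟨o, _, rfl⟩
      · have := ih y h; omega
      · cases o with
        | none => simp
        | some a => have := a.2; simp; omega
  have hτlt : ∀ n i, i < (pr n).length → τ i < m + n := by
    intro n i hi
    rw [hτ n i hi]
    exact hbd n _ (getD_mem' hi)
  have hτm : ∀ i < m, τ i = i := by
    intro i hi
    rw [hτ 0 i (by rw [hp0]; simp [enc]; omega), hp0, enc, List.getD_append _ _ _ _ (by simpa)]
    rw [List.getD_eq_getElem _ _ (by simpa)]
    simp
  have hτM : MK m τ := by
    refine ⟨?_, hτm⟩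
    intro y
    by_cases hy : y < m
    · exact ⟨y, hτm y hy, fun i hi => by rw [hτm i (by omega)]; exact hi⟩
    · refine ⟨(pr (y - m)).length, by rw [hlast]; omega, fun i hi => ?_⟩
      have := hτlt _ i hi
      omega
  have hmap : ∀ σ, MK m σ → ∀ a : ℕ → Fin m, ∀ n, (∀ i < n, σ (m + i) = a i) →
      (pr n).map σ = enc (wd w0 x a n) := by
    intro σ hσ a n
    induction n with
    | zero =>
      intro _
      rw [hp0]
      change _ = enc w0
      conv_rhs => rw [← List.map_id (enc w0)]
      apply List.map_congr_left
      intro y hy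
      exact hσ.2 y (enc_lt w0 y hy)
    | succ n ih =>
      intro h
      change (pr n ++ (x n).toList.map (fun o => o.elim (m + n) Fin.val)).map σ
        = enc (wd w0 x a n * sub (a n) (x n))
      rw [List.map_append, ih (fun i hi => h i (by omega))]
      simp only [enc, FreeMonoid.toList_mul, List.map_append, List.append_assoc]
      congr 2
      simp only [sub, FreeMonoid.toList_map, List.map_map]
      apply List.map_congr_left
      intro o _
      cases o with
      | none => simpa using h n (by omega)
      | some b => simpa using hσ.2 b b.2
  have key : ∀ σ, MK m σ → ∃ a n, (C (σ ∘ τ) ↔ ∃ σ₁, MK m σ₁ ∧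
      (∀ i < (enc (wd w0 x a n)).length, σ₁ i = (enc (wd w0 x a n)).getD i 0) ∧
      σ₁ (enc (wd w0 x a n)).length = m ∧ C σ₁) := by
    intro σ hσ
    obtain ⟨p, hp1, hp2⟩ := hσ.1 m
    have hpm : m ≤ p := by
      by_contra hh
      have := hσ.2 p (by omega)
      omega
    refine ⟨fun i => if h : σ (m + i) < m then ⟨_, h⟩ else ⟨0, by omega⟩, p - m, ?_⟩
    set a : ℕ → Fin m := fun i => if h : σ (m + i) < m then ⟨_, h⟩ else ⟨0, by omega⟩ with ha
    have h1 := hmap σ hσ a (p - m) (by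
      intro i hi
      have := hp2 (m + i) (by omega)
      simp [ha, this])
    have hστ : MK m (σ ∘ τ) := hσ.comp hτM
    have hl : (enc (wd w0 x a (p - m))).length = (pr (p - m)).length := by
      rw [← h1, List.length_map]
    have hA : ∀ i < (enc (wd w0 x a (p - m))).length,
        (σ ∘ τ) i = (enc (wd w0 x a (p - m))).getD i 0 := by
      intro i hi
      have hi' : i < (pr (p - m)).length := by omega
      have h2 : i < ((pr (p - m)).map σ).length := by simpa using hi'
      rw [← h1, Function.comp, hτ _ i hi', List.getD_eq_getElem _ _ hi',
        List.getD_eq_getElem _ _ h2, List.getElem_map]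
    have hB : (σ ∘ τ) (enc (wd w0 x a (p - m))).length = m := by
      rw [hl, Function.comp, hlast, show m + (p - m) = p by omega, hp1]
    constructor
    · intro h
      exact ⟨σ ∘ τ, hστ, hA, hB, h⟩
    · rintro ⟨σ₁, g1, g2, g3, g4⟩
      refine hC σ₁ (σ ∘ τ) g1 hστ _ g3 ?_ ?_ g4
      · intro i hi
        rw [g2 i hi]
        exact enc_lt _ _ (getD_mem' hi)
      · intro i hi
        rcases hi.lt_or_eq with h | h
        · rw [hA i h, g2 i h]
        · rw [h, hB, g3]
  refine ⟨τ, hτM, ?_⟩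
  rcases hmono with h | h
  · left
    intro σ hσ
    obtain ⟨a, n, hk⟩ := key σ hσ
    exact hk.mpr (h a n)
  · right
    intro σ hσ
    obtain ⟨a, n, hk⟩ := key σ hσ
    exact fun hc => h a n (hk.mp hc)

/-! ### Open sets are Ramsey -/

/-- the cube `M_m ∘ γ` is contained in `X` -/
def Acc (X : Set (ℕ → ℕ)) (m : ℕ) (γ : ℕ → ℕ) : Prop := ∀ σ, MK m σ → σ ∘ γ ∈ X

/-- no subcube with the same stem is contained in `X` -/
def Rej (X : Set (ℕ → ℕ)) (m : ℕ) (γ : ℕ → ℕ) : Prop := ∀ τ, MK m τ → ¬ Acc X m (τ ∘ γ)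

lemma Acc.her {X : Set (ℕ → ℕ)} {m : ℕ} {γ : ℕ → ℕ} (h : Acc X m γ) {σ : ℕ → ℕ} (hs : MK m σ) :
    Acc X m (σ ∘ γ) := fun σ' hs' => h (σ' ∘ σ) (hs'.comp hs)

lemma Rej.her {X : Set (ℕ → ℕ)} {m : ℕ} {γ : ℕ → ℕ} (h : Rej X m γ) {σ : ℕ → ℕ} (hs : MK m σ) :
    Rej X m (σ ∘ γ) := fun σ' hs' => h (σ' ∘ σ) (hs'.comp hs)

lemma Rej.not_acc {X : Set (ℕ → ℕ)} {m : ℕ} {γ : ℕ → ℕ} (h : Rej X m γ) : ¬ Acc X m γ :=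
  h _ (MK.id m)

/-- `X` is homogeneous on the cube `M_m ∘ γ`. -/
def Hom (X : Set (ℕ → ℕ)) (m : ℕ) (γ : ℕ → ℕ) : Prop :=
  (∀ σ, MK m σ → σ ∘ γ ∈ X) ∨ (∀ σ, MK m σ → σ ∘ γ ∉ X)

lemma Hom.her {X : Set (ℕ → ℕ)} {m : ℕ} {γ : ℕ → ℕ} (h : Hom X m γ) {σ : ℕ → ℕ} (hs : MK m σ) :
    Hom X m (σ ∘ γ) := by
  rcases h with h | h
  · exact Or.inl fun σ' hs' => h (σ' ∘ σ) (hs'.comp hs)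
  · exact Or.inr fun σ' hs' => h (σ' ∘ σ) (hs'.comp hs)

/-- completely Ramsey sets -/
def CR (X : Set (ℕ → ℕ)) : Prop :=
  ∀ α, Rig α → ∀ k, 1 ≤ k → ∃ τ, MK k τ ∧ Hom X k (τ ∘ α)

lemma FT.pos {d : ℕ} {ρ : ℕ → ℕ} (h : FT d ρ) (hd : 1 ≤ d) : 1 ≤ ρ d := by
  have := h.2.1 0 (by omega)
  omega

lemma FT.val {d m : ℕ} {ρ : ℕ → ℕ} (h : FT d ρ) (h1 : ∀ i < d, ρ i < m)
    (h2 : ∀ y < m, ∃ i < d, ρ i = y) : ρ d = m := by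
  rcases lt_trichotomy (ρ d) m with hh | hh | hh
  · obtain ⟨i, h3, h4⟩ := h2 _ hh
    have := h.2.1 i h3
    omega
  · exact hh
  · obtain ⟨j, h3, h4⟩ := h.1.exists_lt hh
    have := h1 j h3
    omega

/-- fusion for properties attached to all finite type maps -/
lemma fusionFT (k : ℕ) (Q : ℕ → (ℕ → ℕ) → (ℕ → ℕ) → Prop)
    (hd : ∀ d ρ T, k ≤ d → FT d ρ → MK k T → ∃ τ, MK (ρ d) τ ∧ Q d ρ (τ ∘ ρ ∘ T))
    (hh : ∀ d ρ γ σ, k ≤ d → FT d ρ → MK (ρ d) σ → Q d ρ γ → Q d ρ (σ ∘ γ)) :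
    ∃ T, MK k T ∧ ∀ d ρ, k ≤ d → FT d ρ → Q d ρ (ρ ∘ T) := by
  have hher : ∀ d ρ, k ≤ d → FT d ρ → ∀ T σ, MK d σ → Q d ρ (ρ ∘ T) → Q d ρ (ρ ∘ σ ∘ T) := by
    intro d ρ hkd hρ T σ hσ h
    obtain ⟨σ', h1, h2⟩ := push hρ hσ
    have := hh d ρ _ σ' hkd hρ h1 h
    rwa [← Function.comp_assoc, ← h2] at this
  obtain ⟨T, hT, hQ⟩ := fusion k (fun d T => ∀ ρ ∈ {ρ | FT d ρ}, Q d ρ (ρ ∘ T)) (by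
    intro d T hkd hT
    refine finConj k d hkd _ (FT.finite d) (fun ρ T => Q d ρ (ρ ∘ T)) ?_ ?_ T hT
    · intro ρ hρ T hT
      obtain ⟨τ', h1, h2⟩ := hd d ρ T hkd hρ hT
      obtain ⟨τ, h3, h4⟩ := lift hρ h1
      refine ⟨τ, h3, ?_⟩
      rwa [← Function.comp_assoc, h4]
    · intro ρ hρ T σ hT hσ h
      exact hher d ρ hkd hρ T σ hσ h) (by
    intro d T σ hkd hT hσ h ρ hρ
    exact hher d ρ hkd hρ T σ hσ (h ρ hρ))
  exact ⟨T, hT, fun d ρ hkd hρ => hQ d hkd ρ hρ⟩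

lemma open_ramsey (X : Set (ℕ → ℕ)) (β : ℕ → ℕ) (k : ℕ) (hk : 1 ≤ k)
    (hX : ∀ σ, MK k σ → σ ∘ β ∈ X → ∃ d, k ≤ d ∧ ∀ σ₂, MK k σ₂ → (∀ i < d, σ₂ i = σ i) →
      σ₂ ∘ β ∈ X) :
    ∃ τ, MK k τ ∧ Hom X k (τ ∘ β) := by
  -- first fusion: everything is decided
  obtain ⟨T, hT, hQ1⟩ := fusionFT k (fun d ρ γ => Acc X (ρ d) (γ ∘ β) ∨ Rej X (ρ d) (γ ∘ β)) (by
      intro d ρ T hkd hρ hT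
      by_cases h : Rej X (ρ d) (ρ ∘ T ∘ β)
      · exact ⟨_, MK.id _, Or.inr h⟩
      · simp only [Rej, not_forall, not_not] at h
        obtain ⟨τ, h1, h2⟩ := h
        exact ⟨τ, h1, Or.inl h2⟩) (by
      intro d ρ γ σ hkd hρ hσ h
      rcases h with h | h
      · exact Or.inl (h.her hσ)
      · exact Or.inr (h.her hσ))
  -- heredity of the first property for arbitrary members of `M_k`
  have hdec : ∀ d ρ T₁, k ≤ d → FT d ρ → MK k T₁ →
      Acc X (ρ d) (ρ ∘ T₁ ∘ T ∘ β) ∨ Rej X (ρ d) (ρ ∘ T₁ ∘ T ∘ β) := by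
    intro d ρ T₁ hkd hρ hT₁
    obtain ⟨e, he1, he2⟩ := hT₁.1 d
    have hde := hT₁.1.le_first d e he1 he2
    obtain ⟨ρ', s, h1, h2, h3, h4⟩ := cut (hρ.1.comp hT₁.1) e
    have hv : ρ' e = ρ d := by
      apply h1.val
      · intro i hi
        rw [h4 i hi]
        exact hρ.2.1 _ (he2 i hi)
      · intro y hy
        obtain ⟨j', hj1, hj2⟩ := hρ.1.exists_lt hy
        rw [← he1] at hj1
        obtain ⟨j, hj3, hj4⟩ := hT₁.1.exists_lt hj1
        exact ⟨j, hj3, by rw [h4 j hj3, Function.comp, hj4, hj2]⟩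
    rw [hv] at h2
    have e : ρ ∘ T₁ ∘ T ∘ β = s ∘ (ρ' ∘ T ∘ β) := by
      rw [← Function.comp_assoc, h3]; rfl
    rw [e, ← hv]
    rw [← hv] at h2
    rcases hQ1 _ ρ' (hkd.trans hde) h1 with h | h
    · exact Or.inl (h.her h2)
    · exact Or.inr (h.her h2)
  -- second fusion
  obtain ⟨T₂, hT₂, hQ2⟩ := fusionFT k (fun d ρ γ => Acc X (ρ d) (γ ∘ T ∘ β) ∨
      ∀ σ, MK (ρ d) σ → ¬ Acc X (ρ d + 1) (σ ∘ γ ∘ T ∘ β)) (by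
      intro d ρ T₁ hkd hρ hT₁
      rcases hdec d ρ T₁ hkd hρ hT₁ with h | h
      · exact ⟨_, MK.id _, Or.inl h⟩
      obtain ⟨τ, hτ, hτ'⟩ := pigeonhole (hρ.pos (hk.trans hkd))
        (fun σ => Acc X (ρ d + 1) (σ ∘ ρ ∘ T₁ ∘ T ∘ β)) (by
          intro σ σ₂ hσ hσ₂ p hp1 hp2 hag hacc
          have hpm : ρ d ≤ p := by
            by_contra hh
            have := hσ.2 p (by omega)
            omega
          have hle : ∀ x < d + (p - ρ d) + 1, ρ x ≤ p := by
            intro x hx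
            by_cases hxd : x < d
            · have := hρ.2.1 x hxd; omega
            · rw [hρ.ge (not_lt.mp hxd)]; omega
          obtain ⟨ρ', s, h1, h2, h3, h4⟩ := cut (hσ.1.comp hρ.1) (d + (p - ρ d) + 1)
          obtain ⟨ρ₂, s₂, g1, g2, g3, g4⟩ := cut (hσ₂.1.comp hρ.1) (d + (p - ρ d) + 1)
          have hee : ρ₂ = ρ' := by
            apply g1.ext h1
            intro i hi
            rw [g4 i hi, h4 i hi]
            exact hag _ (hle i hi)
          subst hee
          have hv : ρ₂ (d + (p - ρ d) + 1) = ρ d + 1 := by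
            apply h1.val
            · intro i hi
              rw [h4 i hi, Function.comp]
              rcases (hle i hi).lt_or_eq with h' | h'
              · have := hp2 _ h'; omega
              · rw [h', hp1]; omega
            · intro y hy
              rcases Nat.lt_succ_iff_lt_or_eq.mp hy with h' | h'
              · obtain ⟨j, hj1, hj2⟩ := hρ.1.exists_lt h'
                exact ⟨j, by omega, by rw [h4 j (by omega), Function.comp, hj2, hσ.2 y h']⟩
              · refine ⟨d + (p - ρ d), by omega, ?_⟩
                rw [h4 _ (by omega), Function.comp, hρ.2.2, show ρ d + (p - ρ d) = p by omega,
                  hp1, h']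
          have e1 : σ ∘ ρ ∘ T₁ ∘ T ∘ β = s ∘ (ρ₂ ∘ T₁ ∘ T ∘ β) := by
            rw [← Function.comp_assoc, h3]; rfl
          have e2 : σ₂ ∘ ρ ∘ T₁ ∘ T ∘ β = s₂ ∘ (ρ₂ ∘ T₁ ∘ T ∘ β) := by
            rw [← Function.comp_assoc, g3]; rfl
          have hD := hdec _ ρ₂ T₁ (by omega) h1 hT₁
          rw [hv] at hD h2 g2
          rw [e1] at hacc
          rw [e2]
          rcases hD with hD | hD
          · exact hD.her g2
          · exact absurd hacc (hD.her h2).not_acc)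
      refine ⟨τ, hτ, Or.inr ?_⟩
      rcases hτ' with h' | h'
      · exfalso
        apply h τ hτ
        intro σ hσ
        exact h' σ hσ _ (MK.id _)
      · exact h') (by
      intro d ρ γ σ hkd hρ hσ h
      rcases h with h | h
      · exact Or.inl (h.her hσ)
      · exact Or.inr fun σ' hσ' => h (σ' ∘ σ) (hσ'.comp hσ))
  refine ⟨T₂ ∘ T, hT₂.comp hT, ?_⟩
  by_cases hacc : Acc X k ((T₂ ∘ T) ∘ β)
  · exact Or.inl hacc
  right
  have hind : ∀ d, k ≤ d → ∀ ρ, FT d ρ → MK k ρ → ¬ Acc X (ρ d) (ρ ∘ T₂ ∘ T ∘ β) := by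
    intro d hkd
    induction d, hkd using Nat.le_induction with
    | base =>
      intro ρ hρ hρk
      have : ρ = fun x => x := hρ.ext (FT.id k) hρk.2
      subst this
      exact hacc
    | succ d hkd ih =>
      intro ρ' hρ' hρk
      obtain ⟨ρ, s, h1, h2, h3, h4⟩ := cut hρ'.1 d
      have hρM : MK k ρ := ⟨h1.1, fun i hi => by rw [h4 i (by omega), hρk.2 i hi]⟩
      have hn := ih ρ h1 hρM
      have e1 : ρ' ∘ T₂ ∘ T ∘ β = s ∘ (ρ ∘ T₂ ∘ T ∘ β) := by
        rw [h3]; rfl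
      rw [e1]
      have hsd : ρ' d = s (ρ d) := by rw [h3]; rfl
      have hle : s (ρ d) ≤ ρ d := h2.1.le _
      rcases hle.lt_or_eq with hlt | heq
      · have hv : ρ' (d + 1) = ρ d := by
          apply hρ'.val
          · intro i hi
            rcases Nat.lt_succ_iff_lt_or_eq.mp hi with h' | h'
            · rw [← h4 i h']; exact h1.2.1 i h'
            · rw [h', hsd]; exact hlt
          · intro y hy
            obtain ⟨j, hj1, hj2⟩ := h1.1.exists_lt hy
            exact ⟨j, by omega, by rw [← h4 j hj1, hj2]⟩
        rw [hv]
        rcases hdec d ρ T₂ hkd h1 hT₂ with h | h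
        · exact absurd h hn
        · exact (h.her h2).not_acc
      · have hv : ρ' (d + 1) = ρ d + 1 := by
          apply hρ'.val
          · intro i hi
            rcases Nat.lt_succ_iff_lt_or_eq.mp hi with h' | h'
            · rw [← h4 i h']; have := h1.2.1 i h'; omega
            · rw [h', hsd]; omega
          · intro y hy
            rcases Nat.lt_succ_iff_lt_or_eq.mp hy with h' | h'
            · obtain ⟨j, hj1, hj2⟩ := h1.1.exists_lt h'
              exact ⟨j, by omega, by rw [← h4 j hj1, hj2]⟩
            · exact ⟨d, by omega, by rw [hsd, heq, h']⟩
        rw [hv]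
        rcases hQ2 d ρ hkd h1 with h | h
        · exact absurd h hn
        · exact h s h2
  intro σ hσ hmem
  obtain ⟨d, hkd, hd⟩ := hX (σ ∘ T₂ ∘ T) (hσ.comp (hT₂.comp hT)) hmem
  obtain ⟨ρ, s, h1, h2, h3, h4⟩ := cut hσ.1 d
  have hρM : MK k ρ := ⟨h1.1, fun i hi => by rw [h4 i (by omega), hσ.2 i hi]⟩
  have hsρ : ∀ s', MK (ρ d) s' → ∀ i < d, s' (ρ i) = ρ i := fun s' hs' i hi =>
    hs'.2 _ (h1.2.1 i hi)
  refine hind d hkd ρ h1 hρM ?_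
  intro s' hs'
  have hs'M : MK k (s' ∘ ρ) := by
    refine ⟨hs'.1.comp h1.1, fun i hi => ?_⟩
    rw [Function.comp, hsρ s' hs' i (by omega), hρM.2 i hi]
  refine hd (s' ∘ ρ ∘ T₂ ∘ T) (hs'M.comp (hT₂.comp hT)) ?_
  intro i hi
  have hti : (T₂ ∘ T) i < d := lt_of_le_of_lt ((hT₂.comp hT).1.le i) hi
  change s' (ρ ((T₂ ∘ T) i)) = σ ((T₂ ∘ T) i)
  rw [hsρ s' hs' _ hti, h4 _ hti]

/-! ### Completely Ramsey sets form a sigma-algebra -/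

lemma CR.compl {X : Set (ℕ → ℕ)} (h : CR X) : CR Xᶜ := by
  intro α hα k hk
  obtain ⟨τ, h1, h2⟩ := h α hα k hk
  refine ⟨τ, h1, ?_⟩
  rcases h2 with h2 | h2
  · exact Or.inr fun σ hσ hc => hc (h2 σ hσ)
  · exact Or.inl h2

lemma CR.iUnion {X : ℕ → Set (ℕ → ℕ)} (h : ∀ n, CR (X n)) : CR (⋃ n, X n) := by
  intro α hα k hk
  obtain ⟨T, hT, hQ⟩ := fusionFT k (fun d ρ γ => ∀ n ≤ d, Hom (X n) (ρ d) (γ ∘ α)) (by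
    intro d ρ T hkd hρ hT
    have := finConj (ρ d) (ρ d) le_rfl {n | n ≤ d} (Set.finite_le_nat d)
      (fun n τ => Hom (X n) (ρ d) (τ ∘ ρ ∘ T ∘ α)) (by
        intro n _ τ hτ
        exact h n (τ ∘ ρ ∘ T ∘ α) (hτ.1.comp (hρ.1.comp (hT.1.comp hα))) _
          (hρ.pos (hk.trans hkd))) (by
        intro n _ τ σ hτ hσ hh
        exact hh.her hσ) _ (MK.id _)
    exact this) (by
    intro d ρ γ σ hkd hρ hσ hh n hn
    exact (hh n hn).her hσ)
  obtain ⟨τ, h1, h2⟩ := open_ramsey (⋃ n, X n) (T ∘ α) k hk (by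
    intro σ hσ hmem
    obtain ⟨n, hn⟩ := Set.mem_iUnion.mp hmem
    refine ⟨max k n, le_max_left _ _, fun σ₂ hσ₂ hag => ?_⟩
    obtain ⟨ρ, s, h1, h2, h3, h4⟩ := cut hσ.1 (max k n)
    obtain ⟨ρ', s', g1, g2, g3, g4⟩ := cut hσ₂.1 (max k n)
    have hee : ρ' = ρ := by
      apply g1.ext h1
      intro i hi
      rw [g4 i hi, h4 i hi, hag i hi]
    subst hee
    refine Set.mem_iUnion.mpr ⟨n, ?_⟩
    rcases hQ (max k n) ρ' (le_max_left _ _) h1 n (le_max_right _ _) with hh | hh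
    · rw [g3]; exact hh s' g2
    · rw [h3] at hn; exact absurd hn (hh s h2))
  exact ⟨τ ∘ T, h1.comp hT, h2⟩

/-- The sigma-algebra of completely Ramsey sets. -/
@[reducible] def mCR : MeasurableSpace (ℕ → ℕ) where
  MeasurableSet' := CR
  measurableSet_empty := fun _ _ k _ => ⟨_, MK.id k, Or.inr fun _ _ h => h⟩
  measurableSet_compl := fun _ h => h.compl
  measurableSet_iUnion := fun _ h => CR.iUnion h

lemma CR_eval (p n : ℕ) : CR {g | g p = n} := by
  intro α hα k hk
  apply open_ramsey _ _ _ hk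
  intro σ hσ hmem
  refine ⟨max k (α p + 1), le_max_left _ _, fun σ₂ _ hag => ?_⟩
  have : σ₂ (α p) = σ (α p) := hag _ (by have := le_max_right k (α p + 1); omega)
  change σ₂ (α p) = n
  rw [this]; exact hmem

lemma CR.congr {X Y : Set (ℕ → ℕ)} (h : CR X) (he : ∀ g, Rig g → (g ∈ X ↔ g ∈ Y)) : CR Y := by
  intro α hα k hk
  obtain ⟨τ, h1, h2⟩ := h α hα k hk
  refine ⟨τ, h1, ?_⟩
  have hr : ∀ σ, MK k σ → Rig (σ ∘ τ ∘ α) := fun σ hσ => hσ.1.comp (h1.1.comp hα)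
  rcases h2 with h2 | h2
  · exact Or.inl fun σ hσ => (he _ (hr σ hσ)).mp (h2 σ hσ)
  · exact Or.inr fun σ hσ hc => h2 σ hσ ((he _ (hr σ hσ)).mpr hc)

/-! ### The main construction -/

/-- merge the class `d` with the class `a` -/
def kap (d a : ℕ) : ℕ → ℕ := fun x => if x < d then x else if x = d then a else x - 1

lemma kap_MK {d a : ℕ} (h : a < d) : MK d (kap d a) := by
  refine ⟨?_, fun i hi => by simp [kap, hi]⟩
  intro y
  by_cases hy : y < d
  · refine ⟨y, by simp [kap, hy], fun i hi => ?_⟩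
    have : i < d := by omega
    simpa [kap, this] using hi
  · refine ⟨y + 1, ?_, fun i hi => ?_⟩
    · simp only [kap]; rw [if_neg (by omega), if_neg (by omega)]; rfl
    · simp only [kap]; split_ifs <;> omega

lemma step (R : (ℕ → ℕ) → ℕ → ℕ → Prop) (hE : ∀ g, Equivalence (R g))
    (hR : ∀ i j, CR {g | R g i j}) (β : ℕ → ℕ) (hβ : Rig β) (d : ℕ) (hd : 1 ≤ d)
    (ρ : ℕ → ℕ) (hρ : FT d ρ) (a b : ℕ) (ha : a < d) (hb : b < d) (hab : ρ a = ρ b) :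
    ∃ τ, MK d τ ∧ ∀ s, MK (ρ d) s →
      (∀ x y, τ (β x) = τ (β y) → R (s ∘ ρ ∘ τ ∘ β) x y) →
      ∀ x y, τ (β x) = a → τ (β y) = b → R (s ∘ ρ ∘ τ ∘ β) x y := by
  obtain ⟨xa, hxa, -⟩ := hβ a
  obtain ⟨xb, hxb, -⟩ := hβ b
  -- it is enough to treat the two representatives
  suffices H : ∃ τ, MK d τ ∧ ∀ s, MK (ρ d) s →
      (∀ x y, τ (β x) = τ (β y) → R (s ∘ ρ ∘ τ ∘ β) x y) → R (s ∘ ρ ∘ τ ∘ β) xa xb by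
    obtain ⟨τ, h1, h2⟩ := H
    refine ⟨τ, h1, fun s hs hk x y hx hy => ?_⟩
    have e1 : R (s ∘ ρ ∘ τ ∘ β) x xa := hk _ _ (by rw [hx, hxa, h1.2 a ha])
    have e2 : R (s ∘ ρ ∘ τ ∘ β) xb y := hk _ _ (by rw [hy, hxb, h1.2 b hb])
    exact (hE _).trans e1 ((hE _).trans (h2 s hs hk) e2)
  obtain ⟨τ', h1, h2⟩ := hR xa xb (ρ ∘ β) (hρ.1.comp hβ) (ρ d) (hρ.pos hd)
  obtain ⟨τ₁, h3, h4⟩ := lift hρ h1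
  have e1 : τ' ∘ ρ ∘ β = ρ ∘ τ₁ ∘ β := by rw [← Function.comp_assoc, ← h4]; rfl
  rw [e1] at h2
  rcases h2 with h2 | h2
  · exact ⟨τ₁, h3, fun s hs _ => h2 s hs⟩
  obtain ⟨z, hz, -⟩ := (h3.1.comp hβ) d
  have hκ : ρ ∘ kap d a = ρ ∘ kap d b := by
    funext x
    simp only [Function.comp, kap]
    split_ifs
    · rfl
    · exact hab
    · rfl
  obtain ⟨τ₂', g1, g2⟩ := hR xa z (ρ ∘ kap d a ∘ τ₁ ∘ β)
    (hρ.1.comp ((kap_MK ha).1.comp (h3.1.comp hβ))) (ρ d) (hρ.pos hd)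
  obtain ⟨τ₂, g3, g4⟩ := lift hρ g1
  have ea : ∀ s : ℕ → ℕ, s ∘ τ₂' ∘ ρ ∘ kap d a ∘ τ₁ ∘ β = s ∘ ρ ∘ (τ₂ ∘ kap d a ∘ τ₁) ∘ β := by
    intro s
    rw [← Function.comp_assoc τ₂' ρ, ← g4]; rfl
  have eb : ∀ s : ℕ → ℕ, s ∘ τ₂' ∘ ρ ∘ kap d a ∘ τ₁ ∘ β = s ∘ ρ ∘ (τ₂ ∘ kap d b ∘ τ₁) ∘ β := by
    intro s
    rw [← Function.comp_assoc ρ (kap d a), hκ, Function.comp_assoc,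
      ← Function.comp_assoc τ₂' ρ, ← g4]; rfl
  have hτ1 : ∀ c x, c < d → β x = c → τ₁ (β x) = c := by
    intro c x hc hx; rw [hx, h3.2 c hc]
  have hker : ∀ c x, c < d → β x = c →
      (τ₂ ∘ kap d c ∘ τ₁) (β x) = (τ₂ ∘ kap d c ∘ τ₁) (β z) := by
    intro c x hc hx
    have hz' : τ₁ (β z) = d := hz
    simp only [Function.comp]
    rw [hτ1 c x hc hx, hz']
    simp [kap, hc]
  rcases g2 with g2 | g2
  · refine ⟨τ₂ ∘ kap d b ∘ τ₁, g3.comp ((kap_MK hb).comp h3), fun s hs hk => ?_⟩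
    have hxz := g2 s hs
    rw [eb] at hxz
    exact (hE _).trans hxz ((hE _).symm (hk xb z (hker b xb hb hxb)))
  · refine ⟨τ₂ ∘ kap d a ∘ τ₁, g3.comp ((kap_MK ha).comp h3), fun s hs hk => ?_⟩
    have hxz := g2 s hs
    rw [ea] at hxz
    exact absurd (hk xa z (hker a xa ha hxa)) hxz

lemma main (R : (ℕ → ℕ) → ℕ → ℕ → Prop) (hE : ∀ g, Equivalence (R g))
    (hR : ∀ i j, CR {g | R g i j}) (β : ℕ → ℕ) (hβ : Rig β) (k : ℕ) (hk : 1 ≤ k) :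
    ∃ T, MK k T ∧ ∀ σ, Rig σ →
      (∀ x y, T (β x) = T (β y) → R (σ ∘ T ∘ β) x y) →
      ∀ x y, σ (T (β x)) = σ (T (β y)) → R (σ ∘ T ∘ β) x y := by
  let Q : ((ℕ → ℕ) × ℕ × ℕ) → ℕ → (ℕ → ℕ) → Prop := fun p d T =>
    p.1 p.2.1 = p.1 p.2.2 → ∀ s, MK (p.1 d) s →
      (∀ x y, T (β x) = T (β y) → R (s ∘ p.1 ∘ T ∘ β) x y) →
      ∀ x y, T (β x) = p.2.1 → T (β y) = p.2.2 → R (s ∘ p.1 ∘ T ∘ β) x y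
  have hher : ∀ d, ∀ p ∈ {ρ | FT d ρ} ×ˢ (Set.Iio d ×ˢ Set.Iio d), ∀ T σ, MK k T → MK d σ →
      Q p d T → Q p d (σ ∘ T) := by
    rintro d ⟨ρ, a, b⟩ ⟨hρ, ha, hb⟩ T σ hT hσ h hab s hs hker x y hx hy
    simp only [Set.mem_setOf_eq, Set.mem_Iio] at hρ ha hb
    simp only [Function.comp] at hx hy
    obtain ⟨σ', h1, h2⟩ := push hρ hσ
    obtain ⟨xa, hxa, -⟩ := (hT.1.comp hβ) a
    obtain ⟨xb, hxb, -⟩ := (hT.1.comp hβ) b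
    simp only [Function.comp] at hxa hxb
    have e : s ∘ ρ ∘ (σ ∘ T) ∘ β = (s ∘ σ') ∘ ρ ∘ T ∘ β := by
      change s ∘ (ρ ∘ σ) ∘ T ∘ β = _
      rw [h2]; rfl
    have e1 := hker x xa (by simp only [Function.comp]; rw [hx, hxa, hσ.2 a ha])
    have e2 := hker xb y (by simp only [Function.comp]; rw [hy, hxb, hσ.2 b hb])
    have e3 := h hab (s ∘ σ') (hs.comp h1) (by
      intro u v huv
      have := hker u v (by simp only [Function.comp]; rw [huv])
      rwa [e] at this) xa xb hxa hxb
    rw [← e] at e3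
    exact (hE _).trans e1 ((hE _).trans e3 e2)
  obtain ⟨T, hT, hQ⟩ := fusion k
    (fun d T => ∀ p ∈ {ρ | FT d ρ} ×ˢ (Set.Iio d ×ˢ Set.Iio d), Q p d T) (by
      intro d T hkd hT
      refine finConj k d hkd _ ((FT.finite d).prod ((Set.finite_Iio d).prod (Set.finite_Iio d)))
        (fun p T => Q p d T) ?_ (hher d) T hT
      rintro ⟨ρ, a, b⟩ ⟨hρ, ha, hb⟩ T hT
      simp only [Set.mem_setOf_eq, Set.mem_Iio] at hρ ha hb
      by_cases hab : ρ a = ρ b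
      · obtain ⟨τ, h1, h2⟩ := step R hE hR (T ∘ β) (hT.1.comp hβ) d (hk.trans hkd) ρ hρ a b ha hb
          hab
        exact ⟨τ, h1, fun _ => h2⟩
      · exact ⟨_, MK.id d, fun h => absurd h hab⟩) (by
      intro d T σ hkd hT hσ h p hp
      exact hher d p hp T σ hT hσ (h p hp))
  refine ⟨T, hT, fun σ hσ hker x y hxy => ?_⟩
  obtain ⟨d, hkd, hxd, hyd⟩ : ∃ d, k ≤ d ∧ T (β x) < d ∧ T (β y) < d :=
    ⟨k + T (β x) + T (β y) + 1, by omega, by omega, by omega⟩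
  obtain ⟨ρ, s, h1, h2, h3, h4⟩ := cut hσ d
  have e : σ ∘ T ∘ β = s ∘ ρ ∘ T ∘ β := by rw [h3]; rfl
  rw [e] at hker ⊢
  refine hQ d hkd (ρ, T (β x), T (β y)) ⟨h1, hxd, hyd⟩ ?_ s h2 hker x y rfl rfl
  simp only
  rw [h4 _ hxd, h4 _ hyd, hxy]

/-! ### Translation to `Einf` -/

lemma Rig.infinite {g : ℕ → ℕ} (hg : Rig g) : Infinite (Quotient (Setoid.ker g)) := by
  have hs : Function.Surjective (Quotient.lift g (fun _ _ h => h) :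
      Quotient (Setoid.ker g) → ℕ) := by
    intro y
    obtain ⟨n, hn, -⟩ := hg y
    exact ⟨Quotient.mk _ n, hn⟩
  exact Infinite.of_surjective _ hs

/-- the infinite partition given by a rigid surjection -/
noncomputable def toE (g : ℕ → ℕ) : Einf :=
  if h : Rig g then ⟨Setoid.ker g, h.infinite⟩ else ⟨Setoid.ker (fun x => x), Rig.id.infinite⟩

lemma toE_rel {g : ℕ → ℕ} (hg : Rig g) (x y : ℕ) : (toE g).1 x y ↔ g x = g y := by
  have e : toE g = (⟨Setoid.ker g, hg.infinite⟩ : Einf) := dif_pos hg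
  rw [e]; exact Iff.rfl

lemma exists_rig (A : Einf) : ∃ g, Rig g ∧ A = toE g := by
  let P : ℕ → Prop := fun k => ∀ m, A.1 m k → k ≤ m
  have hmin : ∀ x, ∃ k, P k ∧ A.1 k x ∧ k ≤ x := by
    intro x
    have hex : ∃ k, A.1 k x := ⟨x, A.1.refl x⟩
    refine ⟨Nat.find hex, ?_, Nat.find_spec hex, Nat.find_min' hex (A.1.refl x)⟩
    intro m hm
    exact Nat.find_min' hex (A.1.trans hm (Nat.find_spec hex))
  choose r hr1 hr2 hr3 using hmin
  have hPu : ∀ x y, P x → P y → A.1 x y → x = y := fun x y hx hy h =>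
    le_antisymm (hx y (A.1.symm h)) (hy x h)
  have hinf : (setOf P).Infinite := by
    intro hfin
    have := hfin.to_subtype
    have hs : Function.Surjective (fun k : setOf P => (Quotient.mk A.1 k.1)) := by
      intro q
      induction q using Quotient.inductionOn with
      | h x => exact ⟨⟨r x, hr1 x⟩, Quotient.sound (hr2 x)⟩
    have h1 := Finite.of_surjective _ hs
    have h2 := A.2
    exact not_finite (Quotient A.1)
  have hg : Rig (fun x => Nat.count P (r x)) := by
    intro y
    have hn := Nat.nth_mem_of_infinite hinf y
    have hrn : r (Nat.nth P y) = Nat.nth P y := hPu _ _ (hr1 _) hn (hr2 _)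
    refine ⟨Nat.nth P y, ?_, fun i hi => ?_⟩
    · simp only [hrn]
      exact Nat.count_nth_of_infinite hinf y
    · simp only
      have h1 := Nat.count_strict_mono (hr1 i) (lt_of_le_of_lt (hr3 i) hi)
      rwa [Nat.count_nth_of_infinite hinf y] at h1
  refine ⟨_, hg, ?_⟩
  apply Subtype.ext
  apply Setoid.ext
  intro x y
  rw [toE_rel hg]
  constructor
  · intro h
    have : r x = r y := hPu _ _ (hr1 x) (hr1 y)
      (A.1.trans (hr2 x) (A.1.trans h (A.1.symm (hr2 y))))
    rw [this]
  · intro h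
    have := Nat.count_injective (hr1 x) (hr1 y) h
    have h2 := hr2 y
    rw [← this] at h2
    exact A.1.trans (A.1.symm (hr2 x)) h2

lemma mu_toE {g : ℕ → ℕ} (hg : Rig g) {n p : ℕ} (h1 : g p = n) (h2 : ∀ i < p, g i < n) :
    (toE g).mu n = p := by
  have hPe : (fun k => ∀ m, (toE g).1 m k → k ≤ m) = fun k => ∀ m, g m = g k → k ≤ m := by
    funext k
    simp only [toE_rel hg]
  unfold Einf.mu
  rw [hPe]
  set P : ℕ → Prop := fun k => ∀ m, g m = g k → k ≤ m with hP
  have hPp : P p := by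
    intro m hm
    by_contra hh
    have := h2 m (by omega)
    omega
  have hc : Nat.count P p = n := by
    rw [Nat.count_eq_card_filter_range]
    conv_rhs => rw [← Finset.card_range n]
    apply Finset.card_nbij g
    · intro i hi
      simp only [Finset.coe_filter, Finset.mem_range, Set.mem_setOf_eq] at hi
      simpa using h2 i hi.1
    · intro i hi j hj hij
      simp only [Finset.coe_filter, Finset.mem_range, Set.mem_setOf_eq] at hi hj
      exact le_antisymm (hi.2 j hij.symm) (hj.2 i hij)
    · intro y hy
      simp only [Finset.coe_range, Set.mem_Iio] at hy
      obtain ⟨q, hq1, hq2⟩ := hg y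
      refine ⟨q, ?_, hq1⟩
      simp only [Finset.coe_filter, Finset.mem_range, Set.mem_setOf_eq]
      constructor
      · by_contra hh
        rcases (not_lt.mp hh).lt_or_eq with h | h
        · have := hq2 p h; omega
        · subst h; omega
      · intro m hm
        by_contra hh
        have := hq2 m (by omega)
        omega
  rw [← hc]
  exact Nat.nth_count hPp

lemma measurable_toE : @Measurable (ℕ → ℕ) Einf mCR inferInstance toE := by
  letI := mCR
  refine measurable_comap_iff.mpr ?_
  refine measurable_pi_iff.mpr fun n => measurable_pi_iff.mpr fun m => ?_
  apply measurable_to_bool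
  change CR _
  refine (CR_eval m n).congr ?_
  intro g hg
  obtain ⟨p, h1, h2⟩ := hg n
  simp only [Set.mem_setOf_eq, Set.mem_preimage, Function.comp, Set.mem_singleton_iff, Einf.toCS,
    decide_eq_true_eq, mu_toE hg h1 h2, toE_rel hg, h1]

lemma measurable_rel (i j : ℕ) : MeasurableSet {C : Einf | C.1 i j} := by
  have hm : Measurable Einf.toCS := comap_measurable _
  have : {C : Einf | C.1 i j} = ⋃ n, {C : Einf | C.toCS n i = true} ∩ {C | C.toCS n j = true} := by
    ext C
    obtain ⟨g, hg, rfl⟩ := exists_rig C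
    simp only [Set.mem_setOf_eq, Set.mem_iUnion, Set.mem_inter_iff, Einf.toCS, decide_eq_true_eq]
    constructor
    · intro h
      obtain ⟨p, h1, h2⟩ := hg (g i)
      refine ⟨g i, ?_⟩
      rw [mu_toE hg h1 h2]
      have h' := (toE_rel hg i j).mp h
      exact ⟨(toE_rel hg _ _).mpr h1.symm, (toE_rel hg _ _).mpr (by rw [h1, h'])⟩
    · rintro ⟨n, h1, h2⟩
      exact (toE _).1.trans h1 ((toE _).1.symm h2)
  rw [this]
  refine MeasurableSet.iUnion fun n => MeasurableSet.inter ?_ ?_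
  · exact ((measurable_pi_apply i).comp ((measurable_pi_apply n).comp hm))
      (measurableSet_singleton true)
  · exact ((measurable_pi_apply j).comp ((measurable_pi_apply n).comp hm))
      (measurableSet_singleton true)

lemma rn_eq {A B : Einf} {n : ℕ} (h : A.mu n = B.mu n)
    (h2 : ∀ i < B.mu n, ∀ j < B.mu n, (A.1 i j ↔ B.1 i j)) : A.rn n = B.rn n := by
  unfold Einf.rn
  have key : ∀ a b : ℕ, a = b → (∀ i < b, ∀ j < b, (A.1 i j ↔ B.1 i j)) →
      (⟨a, Setoid.comap (fun i => (i : ℕ)) A.1⟩ : Σ k : ℕ, Setoid (Fin k)) =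
      ⟨b, Setoid.comap (fun i => (i : ℕ)) B.1⟩ := by
    intro a b hab hh
    subst hab
    congr 1
    apply Setoid.ext
    intro i j
    exact hh i i.2 j j.2
  exact key _ _ h h2

lemma coarsen_toE {g h : ℕ → ℕ} (hg : Rig g) (hh : Rig h) (hc : Einf.Coarsen (toE g) (toE h)) :
    ∃ σ, Rig σ ∧ g = σ ∘ h := by
  have hc' : ∀ i j, h i = h j → g i = g j := fun i j hij =>
    (toE_rel hg i j).mp (hc i j ((toE_rel hh i j).mpr hij))
  choose q hq1 hq2 using hh
  have e : g = (fun y => g (q y)) ∘ h := by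
    funext x
    exact hc' _ _ (hq1 (h x)).symm
  refine ⟨fun y => g (q y), ?_, e⟩
  intro y
  obtain ⟨p, h1, h2⟩ := hg y
  refine ⟨h p, ?_, fun i hi => ?_⟩
  · simp only; rw [← h1]; exact hc' _ _ (hq1 (h p))
  · simp only
    apply h2
    by_contra hlt
    rcases (not_lt.mp hlt).lt_or_eq with h' | h'
    · have := hq2 i p h'; omega
    · rw [h', hq1] at hi; omega

end DR

/-- Lemma 6.3: for every Borel map `f : 𝓔_∞ → 𝓔_∞` there is a Ramsey conull set `𝓓` such
that for all `B ∈ 𝓓` and `A ≤ B`, if `f(A) ≤ B` then `f(A) ≤ A`. -/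
theorem borel_map_coarsening_lemma (f : Einf → Einf) (hf : Measurable f) :
    ∃ D : Set Einf, RamseyConull D ∧
      ∀ B ∈ D, ∀ A : Einf, Coarsen A B → Coarsen (f A) B → Coarsen (f A) A := by
  refine ⟨{B | ∀ A : Einf, Coarsen A B → Coarsen (f A) B → Coarsen (f A) A}, ?_,
    fun B hB => hB⟩
  rintro s A₀ ⟨B₀, ⟨n, hn⟩, hB₀⟩
  obtain ⟨β, hβ, rfl⟩ := DR.exists_rig B₀
  obtain ⟨T, hT, hmain⟩ := DR.main (fun g i j => (f (DR.toE g)).1 i j)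
    (fun g => (f (DR.toE g)).1.iseqv)
    (fun i j => DR.measurable_toE (hf (DR.measurable_rel i j))) β hβ (n + 1) (by omega)
  have hTβ : DR.Rig (T ∘ β) := hT.1.comp hβ
  have hle : Coarsen (DR.toE (T ∘ β)) (DR.toE β) := by
    intro i j hij
    rw [DR.toE_rel hβ] at hij
    rw [DR.toE_rel hTβ, Function.comp, Function.comp, hij]
  refine ⟨DR.toE (T ∘ β), ⟨⟨n, ?_⟩, fun i j hij => hle i j (hB₀ i j hij)⟩, ?_⟩
  · rw [← hn]
    obtain ⟨p, h1, h2⟩ := hβ n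
    have e1 := DR.mu_toE hβ h1 h2
    have e2 : (DR.toE (T ∘ β)).mu n = p := by
      apply DR.mu_toE hTβ
      · rw [Function.comp, h1, hT.2 n (by omega)]
      · intro i hi
        have := h2 i hi
        rw [Function.comp, hT.2 _ (by omega)]
        exact this
    apply DR.rn_eq (e2.trans e1.symm)
    intro i hi j hj
    rw [e1] at hi hj
    have := h2 i hi
    have := h2 j hj
    rw [DR.toE_rel hTβ, DR.toE_rel hβ, Function.comp, Function.comp, hT.2 _ (by omega),
      hT.2 _ (by omega)]
  · apply Set.eq_empty_of_forall_notMem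
    rintro B ⟨⟨-, hBT⟩, hBX⟩
    apply hBX
    intro A hAB hfB
    have hA : Coarsen A (DR.toE (T ∘ β)) := fun i j h => hAB i j (hBT i j h)
    have hfA : Coarsen (f A) (DR.toE (T ∘ β)) := fun i j h => hfB i j (hBT i j h)
    obtain ⟨g, hg, rfl⟩ := DR.exists_rig A
    obtain ⟨σ, hσ, rfl⟩ := DR.coarsen_toE hg hTβ hA
    intro i j hij
    refine hmain σ hσ ?_ i j ((DR.toE_rel hg i j).mp hij)
    intro x y hxy
    exact hfA x y ((DR.toE_rel hTβ x y).mpr hxy)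
end

section
/- For every m, M ∈ ℕ there exists M' ∈ ℕ with M' ≥ m and M' ≥ M such that the following holds: for every map e : Q(M') → Q(M') there exists s ∈ Q^m(M') such that for all t ∈ Q(M') with t ≤ s, either e(t) ≤ t or e(t) ≰ s. -/
/-- The coarsening order on partitions (equivalence relations) of `{0,…,n−1}`:
`QLe s t` (written `s ≤ t` in the paper) iff every `s`-class is a union of `t`-classes. -/
def QLe {n : ℕ} (s t : Setoid (Fin n)) : Prop := ∀ i j : Fin n, t i j → s i j

/-- `Q^m(n)`: the partitions of `{0,…,n−1}` in which `0, 1, …, m−1` belong to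
pairwise distinct classes. -/
def Qm {n : ℕ} (m : ℕ) (s : Setoid (Fin n)) : Prop :=
  ∀ i j : Fin n, (i : ℕ) < (j : ℕ) → (j : ℕ) < m → ¬ s i j

/-- The word of length `m + N` which starts with `0, …, m-1` and continues with `u`. -/
def wordOf {m N : ℕ} (u : Fin N → Fin m) : Fin (m + N) → Fin m := Fin.append id u

lemma wordOf_castAdd {m N : ℕ} (u : Fin N → Fin m) (c : Fin m) :
    wordOf u (Fin.castAdd N c) = c := by
  simp [wordOf]

lemma wordOf_natAdd {m N : ℕ} (u : Fin N → Fin m) (c : Fin N) :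
    wordOf u (Fin.natAdd m c) = u c := by
  simp [wordOf]

/-- A bad word yields a code: a partition `P` of the letters and two letters `a`, `b`. -/
lemma bad_data {m N : ℕ} (e : Setoid (Fin (m + N)) → Setoid (Fin (m + N)))
    (u : Fin N → Fin m)
    (h : ¬ ∀ t : Setoid (Fin (m + N)), QLe t (Setoid.ker (wordOf u)) →
      (QLe (e t) t ∨ ¬ QLe (e t) (Setoid.ker (wordOf u)))) :
    ∃ d : Setoid (Fin m) × Fin m × Fin m,
      d.1 d.2.1 d.2.2 ∧
      (∀ i j, wordOf u i = wordOf u j → e (Setoid.comap (wordOf u) d.1) i j) ∧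
      ¬ e (Setoid.comap (wordOf u) d.1) (Fin.castAdd N d.2.1) (Fin.castAdd N d.2.2) := by
  push Not at h
  obtain ⟨t, hts, hn, hes⟩ := h
  have hts' : ∀ i j, wordOf u i = wordOf u j → t i j := fun i j hij => hts i j hij
  have hes' : ∀ i j, wordOf u i = wordOf u j → e t i j := fun i j hij => hes i j hij
  have anc : ∀ i, wordOf u i = wordOf u (Fin.castAdd N (wordOf u i)) := fun i => by
    rw [wordOf_castAdd]
  have ht : Setoid.comap (wordOf u) (Setoid.comap (Fin.castAdd N) t) = t := by
    ext i j
    change t (Fin.castAdd N (wordOf u i)) (Fin.castAdd N (wordOf u j)) ↔ t i j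
    have h1 := hts' _ _ (anc i)
    have h2 := hts' _ _ (anc j)
    exact ⟨fun h => t.trans (t.trans h1 h) (t.symm h2),
      fun h => t.trans (t.trans (t.symm h1) h) h2⟩
  unfold QLe at hn
  push Not at hn
  obtain ⟨x, y, hxy, hexy⟩ := hn
  refine ⟨(Setoid.comap (Fin.castAdd N) t, wordOf u x, wordOf u y), ?_, ?_, ?_⟩
  · change t (Fin.castAdd N (wordOf u x)) (Fin.castAdd N (wordOf u y))
    exact t.trans (t.trans (t.symm (hts' _ _ (anc x))) hxy) (hts' _ _ (anc y))
  · rw [ht]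
    exact hes'
  · rw [ht]
    intro h
    exact hexy ((e t).trans ((e t).trans (hes' _ _ (anc x)) h) ((e t).symm (hes' _ _ (anc y))))

lemma exists_large (m M K : ℕ) (hm : 0 < m) : ∃ N, M ≤ N ∧ K * (m - 1) ^ N < m ^ N := by
  have hm' : (0 : ℝ) < m := by exact_mod_cast hm
  have hlim : Filter.Tendsto (fun N : ℕ => (K : ℝ) * (((m - 1 : ℕ) : ℝ) / m) ^ N)
      Filter.atTop (nhds ((K : ℝ) * 0)) := by
    apply Filter.Tendsto.const_mul
    apply tendsto_pow_atTop_nhds_zero_of_lt_one (by positivity)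
    rw [div_lt_one hm']
    exact_mod_cast Nat.sub_lt hm one_pos
  rw [mul_zero] at hlim
  obtain ⟨N, hN, hMN⟩ :=
    ((hlim.eventually (gt_mem_nhds one_pos)).and (Filter.eventually_ge_atTop M)).exists
  refine ⟨N, hMN, ?_⟩
  rw [div_pow, ← mul_div_assoc, div_lt_one (by positivity)] at hN
  exact_mod_cast hN

theorem comb_lemma_general (m M : ℕ) :
    ∃ M' : ℕ, m ≤ M' ∧ M ≤ M' ∧
      ∀ e : Setoid (Fin M') → Setoid (Fin M'),
        ∃ s : Setoid (Fin M'), Qm m s ∧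
          ∀ t : Setoid (Fin M'), QLe t s → (QLe (e t) t ∨ ¬ QLe (e t) s) := by
  classical
  rcases Nat.eq_zero_or_pos m with rfl | hm
  · refine ⟨M, Nat.zero_le _, le_rfl, fun e => ⟨⊤, fun i j _ h => absurd h (Nat.not_lt_zero _),
      fun t ht => ?_⟩⟩
    by_cases h : QLe (e t) ⊤
    · exact Or.inl fun i j _ => h i j trivial
    · exact Or.inr h
  have : Finite (Setoid (Fin m)) :=
    Finite.of_injective (fun s : Setoid (Fin m) => (fun i j => s i j : Fin m → Fin m → Prop))
      (fun s t h => Setoid.ext fun i j => iff_of_eq (congrFun (congrFun h i) j))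
  have : Fintype (Setoid (Fin m)) := Fintype.ofFinite _
  obtain ⟨N, hMN, hN⟩ := exists_large m M (Fintype.card (Setoid (Fin m) × Fin m × Fin m)) hm
  refine ⟨m + N, by omega, by omega, fun e => ?_⟩
  by_contra hcon
  push Not at hcon
  have hbad : ∀ u : Fin N → Fin m, ∃ d : Setoid (Fin m) × Fin m × Fin m,
      d.1 d.2.1 d.2.2 ∧
      (∀ i j, wordOf u i = wordOf u j → e (Setoid.comap (wordOf u) d.1) i j) ∧
      ¬ e (Setoid.comap (wordOf u) d.1) (Fin.castAdd N d.2.1) (Fin.castAdd N d.2.2) := by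
    intro u
    apply bad_data
    push Not
    apply hcon
    intro i j hij hj h
    have h' : wordOf u (Fin.castAdd N ⟨i, hij.trans hj⟩)
        = wordOf u (Fin.castAdd N ⟨j, hj⟩) := h
    rw [wordOf_castAdd, wordOf_castAdd] at h'
    have := congrArg Fin.val h'
    simp at this
    omega
  choose d hd1 hd2 hd3 using hbad
  have hne : ∀ u, (d u).2.1 ≠ (d u).2.2 := by
    intro u h
    apply hd3 u
    rw [h]
  let F : (Fin N → Fin m) →
      Σ p : Setoid (Fin m) × Fin m × Fin m, (Fin N → {c : Fin m // c ≠ p.2.2}) :=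
    fun u => ⟨d u, fun x => if h : u x = (d u).2.2 then ⟨(d u).2.1, hne u⟩ else ⟨u x, h⟩⟩
  have hF : Function.Injective F := by
    intro u v huv
    have hduv : d u = d v := congrArg Sigma.fst huv
    have hval : ∀ x, (if u x = (d u).2.2 then (d u).2.1 else u x)
        = (if v x = (d v).2.2 then (d v).2.1 else v x) := by
      intro x
      have := congrArg (fun q : Σ p : Setoid (Fin m) × Fin m × Fin m,
        (Fin N → {c : Fin m // c ≠ p.2.2}) => (q.2 x : Fin m)) huv
      simp only [F] at this
      split_ifs at this ⊢ <;> exact this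
    have u2 := hd2 u
    have u3 := hd3 u
    have v2 := hd2 v
    have v1 := hd1 v
    rw [hduv] at u2 u3 hval
    have v3 := hd3 v
    have nuv := hne v
    generalize d v = p at *
    obtain ⟨P, a, b⟩ := p
    dsimp only at *
    have hP : ∀ c : Fin m, P c (if c = b then a else c) := by
      intro c
      split_ifs with h
      · subst h; exact P.symm v1
      · exact P.refl _
    have hw : ∀ i, P (wordOf u i) (wordOf v i) := by
      intro i
      refine Fin.addCases (fun c => ?_) (fun c => ?_) i
      · rw [wordOf_castAdd, wordOf_castAdd]
      · rw [wordOf_natAdd, wordOf_natAdd]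
        have h1 := hP (u c)
        rw [hval c] at h1
        exact P.trans h1 (P.symm (hP (v c)))
    have ht : Setoid.comap (wordOf u) P = Setoid.comap (wordOf v) P := by
      ext i j
      change P (wordOf u i) (wordOf u j) ↔ P (wordOf v i) (wordOf v j)
      exact ⟨fun h => P.trans (P.trans (P.symm (hw i)) h) (hw j),
        fun h => P.trans (P.trans (hw i) h) (P.symm (hw j))⟩
    rw [ht] at u2 u3
    generalize e (Setoid.comap (wordOf v) P) = E at *
    have hu : ∀ x, E (Fin.natAdd m x) (Fin.castAdd N (u x)) := fun x =>
      u2 _ _ (by rw [wordOf_natAdd, wordOf_castAdd])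
    have hv : ∀ x, E (Fin.natAdd m x) (Fin.castAdd N (v x)) := fun x =>
      v2 _ _ (by rw [wordOf_natAdd, wordOf_castAdd])
    funext x
    have h := hval x
    have hE := E.trans (E.symm (hu x)) (hv x)
    split_ifs at h with h1 h2 h2
    · rw [h1, h2]
    · rw [h1, ← h] at hE
      exact absurd (E.symm hE) u3
    · rw [h2, h] at hE
      exact absurd hE u3
    · exact h
  have hcard := Fintype.card_le_of_injective F hF
  rw [Fintype.card_sigma] at hcard
  simp only [Fintype.card_fun, Fintype.card_fin, Fintype.card_subtype_compl,
    Fintype.card_subtype_eq, ne_eq, Finset.sum_const, Finset.card_univ, smul_eq_mul] at hcard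
  omega
end
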